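/- Let G be an infinite, connected, locally finite, vertex-transitive simple graph with vertex set V, and let Ḡ be a locally finite simple graph on the same vertex set V such that every edge of G is an edge of Ḡ and Ḡ has at least one edge not in G. Let Γ be a subgroup of Aut(G) acting transitively on V, and let 𝒜 be a subgroup of Γ having the finite coset property relative to Γ, such that every element of 𝒜 is also an automorphism of Ḡ. Let σ̄_n(v) denote the number of n-step SAWs in Ḡ from v. If σ_n(v)^{1/n} → μ as n → ∞ for a vertex v, then μ < liminf_{n→∞} σ̄_n(v)^{1/n}. -/

import Mathlib

open Filter

/-- The number of `n`-step self-avoiding walks in `G` starting at `v`. -/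
noncomputable def sawCount {V : Type*} (G : SimpleGraph V) (v : V) (n : ℕ) : ℕ :=
  Nat.card {p : Σ w : V, G.Walk v w // p.2.IsPath ∧ p.2.length = n}

/-- The subgroup `A` of the permutation group `Γ` of the vertex set `V` has the finite
coset property relative to `Γ` with root `ρ` if there exist `ν₀ = 1, ν₁, …, ν_s ∈ Γ`
such that the sets `νᵢ A ρ`, `0 ≤ i ≤ s`, partition `V` (each vertex lies in exactly one). -/
def FiniteCosetProperty {V : Type*} (Γ A : Subgroup (Equiv.Perm V)) (ρ : V) : Prop :=
  ∃ (s : ℕ) (ν : Fin (s + 1) → Equiv.Perm V),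
    (∀ i, ν i ∈ Γ) ∧ ν 0 = 1 ∧
    ∀ v : V, ∃! i : Fin (s + 1), ∃ α ∈ A, (ν i) (α ρ) = v

/-!
Write `μ` for the connective constant of `G`. By transitivity every vertex of `G` starts at least
`μ ^ n` self-avoiding walks of length `n`, and the finite coset property puts a new edge within
bounded distance of every vertex. It suffices to find `c * λ ^ n` walks in `Ḡ` with `λ > μ`.

If `G` has a cut vertex, then every vertex is one. A renewal argument shows that the walks from a
vertex that stay away from one side of it have a generating function diverging at `1 / μ`. Such a
walk can be prolonged by a bounded detour ending with a new edge and then restarted on a side away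
from everything visited so far; the resulting recursion makes the walks in `Ḡ` grow faster than
`μ ^ n`.

If `G` has no cut vertex, we use Kesten's pattern argument. Choose `k` such that the walks visiting
fewer than `k` vertices of the ball around each of their vertices are exponentially negligible,
while those visiting at most `k` are not. Most of the latter have a positive density of chunks
filling a ball with exactly `k` vertices. No other part of the walk meets such a ball, and since `G`
is 2-connected the chunk can be rerouted inside it through a new edge. Choosing which `r` of the `M`
chunks to reroute gains a factor `M.choose r` against a loss of at most `C ^ r`, which is
exponential for `r` a small proportion of `M`.
-/

namespace SelfAvoiding

section Lists

variable {α : Type*}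

theorem isChain_cons_append {R : α → α → Prop} {x : α} {l₁ l₂ : List α} :
    (x :: (l₁ ++ l₂)).IsChain R ↔
      (x :: l₁).IsChain R ∧ (l₁.getLastD x :: l₂).IsChain R := by
  induction l₁ generalizing x with
  | nil => simp
  | cons a l ih =>
    rw [List.cons_append, List.isChain_cons_cons, List.isChain_cons_cons, ih, List.getLastD_cons,
      and_assoc]

theorem getLastD_append (x : α) (l₁ l₂ : List α) :
    (l₁ ++ l₂).getLastD x = l₂.getLastD (l₁.getLastD x) := by
  induction l₁ generalizing x with
  | nil => rfl
  | cons a l ih => rw [List.cons_append, List.getLastD_cons, List.getLastD_cons, ih]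

theorem getLastD_mem_of_ne_nil (x : α) {l : List α} (h : l ≠ []) : l.getLastD x ∈ l := by
  obtain ⟨a, l, rfl⟩ := List.exists_cons_of_ne_nil h
  rw [List.getLastD_cons]
  exact List.getLastD_mem_cons

end Lists

/-- The list `l` continues the vertex `x` to a self-avoiding walk `x :: l` of `H`. The starting
vertex is kept outside the list, so that `l.length` is the number of steps, `l.getLastD x` is the
endpoint, and concatenation of walks is `l₁ ++ l₂`. -/
def IsSaw {V : Type*} (H : SimpleGraph V) (x : V) (l : List V) : Prop :=
  (x :: l).IsChain H.Adj ∧ (x :: l).Nodup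

section IsSaw

variable {V : Type*} {G H : SimpleGraph V} {x y : V} {l l₁ l₂ : List V}

theorem isSaw_nil : IsSaw H x [] := by
  simp [IsSaw]

theorem isSaw_cons : IsSaw H x (y :: l) ↔ H.Adj x y ∧ IsSaw H y l ∧ x ∉ y :: l := by
  unfold IsSaw
  rw [List.isChain_cons_cons, List.nodup_cons (a := x)]
  tauto

theorem isSaw_append : IsSaw H x (l₁ ++ l₂) ↔
    IsSaw H x l₁ ∧ IsSaw H (l₁.getLastD x) l₂ ∧ ∀ t ∈ x :: l₁, t ∉ l₂ := by
  unfold IsSaw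
  rw [isChain_cons_append, ← List.cons_append, List.nodup_append']
  constructor
  · rintro ⟨⟨hc₁, hc₂⟩, hn₁, hn₂, hd⟩
    exact ⟨⟨hc₁, hn₁⟩, ⟨hc₂, List.nodup_cons.2 ⟨hd List.getLastD_mem_cons, hn₂⟩⟩,
      fun t ht => hd ht⟩
  · rintro ⟨⟨hc₁, hn₁⟩, ⟨hc₂, hn₂⟩, hd⟩
    exact ⟨⟨hc₁, hc₂⟩, hn₁, (List.nodup_cons.1 hn₂).2, fun t ht => hd t ht⟩

theorem IsSaw.take (h : IsSaw H x l) (m : ℕ) : IsSaw H x (l.take m) := by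
  rw [← List.take_append_drop m l, isSaw_append] at h
  exact h.1

theorem IsSaw.drop (h : IsSaw H x l) (m : ℕ) : IsSaw H ((l.take m).getLastD x) (l.drop m) := by
  rw [← List.take_append_drop m l, isSaw_append] at h
  exact h.2.1

theorem IsSaw.mono (hGH : G ≤ H) (h : IsSaw G x l) : IsSaw H x l :=
  ⟨h.1.imp fun _ _ => @hGH _ _, h.2⟩

theorem isSaw_map_iff (γ : G ≃g H) : IsSaw H (γ x) (l.map γ) ↔ IsSaw G x l := by
  unfold IsSaw
  rw [← List.map_cons (f := γ), List.isChain_map, List.nodup_map_iff γ.injective]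
  simp only [SimpleGraph.Iso.map_adj_iff]

theorem getLastD_tail_support (p : H.Walk x y) : p.support.tail.getLastD x = y := by
  induction p with
  | nil => rfl
  | cons h q ih =>
    rw [SimpleGraph.Walk.support_cons, List.tail_cons, ← SimpleGraph.Walk.cons_tail_support q,
      List.getLastD_cons, ih]

theorem isSaw_tail_support {p : H.Walk x y} (hp : p.IsPath) : IsSaw H x p.support.tail := by
  unfold IsSaw
  rw [SimpleGraph.Walk.cons_tail_support]
  exact ⟨p.isChain_adj_support, hp.support_nodup⟩

theorem exists_walk_of_isChain (h : (x :: l).IsChain H.Adj) :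
    ∃ p : H.Walk x (l.getLastD x), p.support = x :: l := by
  induction l generalizing x with
  | nil => exact ⟨SimpleGraph.Walk.nil, rfl⟩
  | cons a l ih =>
    rw [List.isChain_cons_cons] at h
    obtain ⟨p, hp⟩ := ih h.2
    rw [List.getLastD_cons]
    exact ⟨SimpleGraph.Walk.cons h.1 p, by simp [hp]⟩

theorem exists_isSaw_getLastD_eq (h : H.Reachable x y) : ∃ l, IsSaw H x l ∧ l.getLastD x = y := by
  obtain ⟨p, hp⟩ := h.exists_isPath
  exact ⟨_, isSaw_tail_support hp, getLastD_tail_support p⟩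

theorem dist_le_length_of_isChain (h : (x :: l).IsChain G.Adj) (hy : y ∈ x :: l) :
    G.dist x y ≤ l.length := by
  classical
  obtain ⟨p, hp⟩ := exists_walk_of_isChain h
  have hy' : y ∈ p.support := hp ▸ hy
  calc G.dist x y ≤ (p.takeUntil y hy').length := SimpleGraph.dist_le _
    _ ≤ p.length := p.length_takeUntil_le_length hy'
    _ = l.length := by simpa using congrArg List.length hp

end IsSaw

section Count

variable {V : Type*} {H : SimpleGraph V} [H.LocallyFinite]

theorem finite_setOf_isSaw (x : V) (n : ℕ) : {l | IsSaw H x l ∧ l.length = n}.Finite := by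
  induction n generalizing x with
  | zero =>
    refine (Set.finite_singleton []).subset ?_
    rintro l ⟨-, hl⟩
    exact List.length_eq_zero_iff.1 hl
  | succ n ih =>
    refine ((H.neighborSet x).toFinite.biUnion
      fun y _ => (ih y).image (List.cons y)).subset ?_
    rintro (_ | ⟨y, l⟩) ⟨hl, hn⟩
    · simp at hn
    · rw [isSaw_cons] at hl
      exact Set.mem_biUnion hl.1 ⟨l, ⟨hl.2.1, by simpa using hn⟩, rfl⟩

/-- The finite set of `n`-step self-avoiding walks of `H` from `x`. -/
noncomputable def saws (H : SimpleGraph V) [H.LocallyFinite] (x : V) (n : ℕ) : Finset (List V) :=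
  (finite_setOf_isSaw (H := H) x n).toFinset

theorem mem_saws {x : V} {n : ℕ} {l : List V} : l ∈ saws H x n ↔ IsSaw H x l ∧ l.length = n := by
  simp [saws]

theorem sawCount_eq_card_saws (x : V) (n : ℕ) : sawCount H x n = (saws H x n).card := by
  rw [sawCount, ← Nat.card_eq_finsetCard]
  refine Nat.card_congr (Equiv.ofBijective (fun p => ⟨p.1.2.support.tail,
    mem_saws.2 ⟨isSaw_tail_support p.2.1, by simpa using p.2.2⟩⟩) ⟨?_, ?_⟩)
  · rintro ⟨⟨w, p⟩, hp, hn⟩ ⟨⟨w', p'⟩, hp', hn'⟩ h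
    simp only [Subtype.mk.injEq] at h
    obtain rfl : w = w' := by rw [← getLastD_tail_support p, ← getLastD_tail_support p', h]
    have hs : p.support = p'.support := by
      rw [← SimpleGraph.Walk.cons_tail_support p, ← SimpleGraph.Walk.cons_tail_support p', h]
    obtain rfl := SimpleGraph.Walk.ext_support hs
    rfl
  · rintro ⟨l, hl⟩
    obtain ⟨⟨hc, hnd⟩, hn⟩ := mem_saws.1 hl
    obtain ⟨p, hp⟩ := exists_walk_of_isChain hc
    refine ⟨⟨⟨_, p⟩, p.isPath_def.2 (hp ▸ hnd), ?_⟩, by simp [hp]⟩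
    simpa [hn] using congrArg List.length hp

theorem saws_zero (x : V) : saws H x 0 = {[]} := by
  ext l
  rw [mem_saws, List.length_eq_zero_iff, Finset.mem_singleton, and_iff_right_iff_imp]
  rintro rfl
  exact isSaw_nil

theorem card_saws_one_le (x : V) : (saws H x 1).card ≤ H.degree x := by
  classical
  refine (Finset.card_le_card (t := (H.neighborFinset x).image fun y => [y]) fun l hl => ?_).trans
    Finset.card_image_le
  obtain ⟨hl, hn⟩ := mem_saws.1 hl
  obtain ⟨y, rfl⟩ := List.length_eq_one_iff.1 hn
  exact Finset.mem_image_of_mem _ ((H.mem_neighborFinset x y).2 (isSaw_cons.1 hl).1)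

theorem card_saws_add_le (x : V) (m : ℕ) {n s : ℕ} (hs : ∀ y, (saws H y n).card ≤ s) :
    (saws H x (m + n)).card ≤ s * (saws H x m).card := by
  classical
  apply Finset.card_le_mul_card_image_of_maps_to (f := List.take m)
  · intro l hl
    obtain ⟨hl, hn⟩ := mem_saws.1 hl
    exact mem_saws.2 ⟨hl.take m, by simp [hn]⟩
  · intro p _
    refine (Finset.card_le_card_of_injOn (List.drop m) ?_ ?_).trans (hs (p.getLastD x))
    · intro l hl
      obtain ⟨hl', rfl⟩ := Finset.mem_filter.1 (Finset.mem_coe.1 hl)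
      obtain ⟨hl', hn⟩ := mem_saws.1 hl'
      exact mem_saws.2 ⟨hl'.drop m, by simp [hn]⟩
    · intro a ha b hb hab
      rw [← List.take_append_drop m a, ← List.take_append_drop m b, (Finset.mem_filter.1 ha).2,
        (Finset.mem_filter.1 hb).2, hab]

theorem card_saws_le_pow {Δ : ℕ} (hΔ : ∀ y, H.degree y ≤ Δ) (x : V) (n : ℕ) :
    (saws H x n).card ≤ Δ ^ n := by
  induction n with
  | zero => simp [saws_zero]
  | succ n ih =>
    rw [pow_succ']
    exact (card_saws_add_le x n fun y => (card_saws_one_le y).trans (hΔ y)).trans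
      (Nat.mul_le_mul_left _ ih)

theorem card_saws_add_le_pow_mul {Δ : ℕ} (hΔ : ∀ y, H.degree y ≤ Δ) (x : V) (m n : ℕ) :
    (saws H x (m + n)).card ≤ Δ ^ n * (saws H x m).card :=
  card_saws_add_le x m fun y => card_saws_le_pow hΔ y n

end Count

section Distance

variable {V : Type*} {G H : SimpleGraph V}

theorem dist_map_iso (γ : G ≃g H) (x y : V) : H.dist (γ x) (γ y) = G.dist x y := by
  rw [SimpleGraph.dist_eq_sInf, SimpleGraph.dist_eq_sInf]
  congr 1
  ext n
  constructor
  · rintro ⟨p, rfl⟩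
    exact ⟨(p.map γ.symm.toHom).copy (γ.symm_apply_apply x) (γ.symm_apply_apply y), by simp⟩
  · rintro ⟨p, rfl⟩
    exact ⟨p.map γ.toHom, by simp⟩

theorem finite_setOf_dist_le [G.LocallyFinite] (hc : G.Connected) (x : V) (r : ℕ) :
    {y | G.dist x y ≤ r}.Finite := by
  have hsaws : (⋃ n ≤ r, (fun l => l.getLastD x) '' (saws G x n : Set (List V))).Finite :=
    (Set.finite_le_nat r).biUnion fun n _ => (saws G x n).finite_toSet.image _
  refine hsaws.subset fun y hy => ?_
  obtain ⟨p, hp, hlen⟩ := hc.exists_path_of_dist x y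
  exact Set.mem_biUnion (x := p.length) (hlen.trans_le hy) ⟨p.support.tail,
    mem_saws.2 ⟨isSaw_tail_support hp, by simp⟩, getLastD_tail_support p⟩

theorem one_le_card_saws [Infinite V] [G.LocallyFinite] (hc : G.Connected) (x : V) (n : ℕ) :
    1 ≤ (saws G x n).card := by
  obtain ⟨y, hy⟩ := (finite_setOf_dist_le hc x n).exists_notMem
  obtain ⟨l, hl, rfl⟩ := exists_isSaw_getLastD_eq (hc.preconnected x y)
  have hn : n < l.length :=
    (not_le.1 hy).trans_le (dist_le_length_of_isChain hl.1 List.getLastD_mem_cons)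
  exact Finset.card_pos.2 ⟨l.take n, mem_saws.2 ⟨hl.take n, by simpa using hn.le⟩⟩

end Distance

section Transitive

variable {V : Type*} {G : SimpleGraph V} [G.LocallyFinite]

theorem card_filter_saws_map (γ : G ≃g G) (x : V) (n : ℕ) (P Q : List V → Prop)
    [DecidablePred P] [DecidablePred Q] (hPQ : ∀ l, Q (l.map γ) ↔ P l) :
    ((saws G (γ x) n).filter Q).card = ((saws G x n).filter P).card := by
  symm
  refine Finset.card_bij (fun l _ => l.map γ) (fun l hl => ?_)
    (fun a _ b _ h => List.map_injective_iff.2 γ.injective h) (fun l hl => ?_)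
  · simp only [Finset.mem_filter, mem_saws, isSaw_map_iff, hPQ, List.length_map] at hl ⊢
    exact hl
  · have hmap : (l.map γ.symm).map γ = l := by simp [Function.comp_def]
    refine ⟨l.map γ.symm, ?_, hmap⟩
    rw [← hmap] at hl
    simpa only [Finset.mem_filter, mem_saws, isSaw_map_iff, hPQ, List.length_map] using hl

theorem card_saws_eq (hvt : ∀ u w : V, ∃ γ : G ≃g G, γ u = w) (x y : V) (n : ℕ) :
    (saws G x n).card = (saws G y n).card := by
  obtain ⟨γ, rfl⟩ := hvt y x
  simpa using card_filter_saws_map γ y n (fun _ => True) (fun _ => True) (by simp)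

end Transitive

section Growth

variable {a : ℕ → ℝ} {μ : ℝ}

theorem pow_le_of_tendsto_rpow_one_div (ha : ∀ n, 1 ≤ a n)
    (hmul : ∀ m n, a (m + n) ≤ a m * a n)
    (hμ : Tendsto (fun n : ℕ => a n ^ ((1 : ℝ) / n)) atTop (nhds μ)) (n : ℕ) : μ ^ n ≤ a n := by
  have hpos n : 0 < a n := zero_lt_one.trans_le (ha n)
  have hsub : Subadditive fun n => Real.log (a n) := fun m n => by
    rw [← Real.log_mul (hpos m).ne' (hpos n).ne']
    exact Real.log_le_log (hpos _) (hmul m n)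
  have hbdd : BddBelow (Set.range fun n : ℕ => Real.log (a n) / n) :=
    ⟨0, Set.forall_mem_range.2 fun n => div_nonneg (Real.log_nonneg (ha n)) n.cast_nonneg⟩
  have hexp : μ = Real.exp hsub.lim := by
    refine tendsto_nhds_unique hμ
      (((Real.continuous_exp.tendsto _).comp (hsub.tendsto_lim hbdd)).congr fun n => ?_)
    rw [Function.comp_apply, Real.rpow_def_of_pos (hpos n), mul_one_div]
  rcases eq_or_ne n 0 with rfl | hn
  · simpa using ha 0
  · rw [hexp, ← Real.exp_nat_mul, ← Real.le_log_iff_exp_le (hpos n), mul_comm]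
    exact (le_div_iff₀ (by positivity)).1 (hsub.lim_le_div hbdd hn)

theorem le_liminf_rpow_one_div {c lam Δ : ℝ} (hc : 0 < c) (hlam : 0 ≤ lam) (hΔ : 0 ≤ Δ)
    (hlower : ∀ n, c * lam ^ n ≤ a n) (hupper : ∀ n, a n ≤ Δ ^ n) :
    lam ≤ liminf (fun n : ℕ => a n ^ ((1 : ℝ) / n)) atTop := by
  have ha n : 0 ≤ a n := (by positivity : 0 ≤ c * lam ^ n).trans (hlower n)
  have hroot : Tendsto (fun n : ℕ => c ^ ((1 : ℝ) / n) * lam) atTop (nhds lam) := by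
    have h := (Real.continuousAt_const_rpow (a := c) (b := 0) hc.ne').tendsto.comp
      tendsto_one_div_atTop_nhds_zero_nat
    simpa [Function.comp_def] using h.mul_const lam
  rw [← hroot.liminf_eq]
  refine liminf_le_liminf ?_ hroot.isBoundedUnder_ge
    (IsBoundedUnder.isCoboundedUnder_ge ⟨Δ, ?_⟩)
  · filter_upwards [eventually_ge_atTop 1] with n hn
    calc c ^ ((1 : ℝ) / n) * lam = (c * lam ^ n) ^ ((1 : ℝ) / n) := by
          rw [Real.mul_rpow hc.le (by positivity), one_div, Real.pow_rpow_inv_natCast hlam (by lia)]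
      _ ≤ a n ^ ((1 : ℝ) / n) := Real.rpow_le_rpow (by positivity) (hlower n) (by positivity)
  · rw [eventually_map]
    filter_upwards [eventually_ge_atTop 1] with n hn
    calc a n ^ ((1 : ℝ) / n) ≤ (Δ ^ n) ^ ((1 : ℝ) / n) :=
          Real.rpow_le_rpow (ha n) (hupper n) (by positivity)
      _ = Δ := by rw [one_div, Real.pow_rpow_inv_natCast hΔ (by lia)]

variable {V : Type*} {G : SimpleGraph V} [G.LocallyFinite] [Infinite V]

theorem pow_le_card_saws (hc : G.Connected) (hvt : ∀ u w : V, ∃ γ : G ≃g G, γ u = w) {v : V}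
    (hμ : Tendsto (fun n : ℕ => ((saws G v n).card : ℝ) ^ ((1 : ℝ) / n)) atTop (nhds μ))
    (x : V) (n : ℕ) : μ ^ n ≤ (saws G x n).card := by
  rw [card_saws_eq hvt x v]
  refine pow_le_of_tendsto_rpow_one_div (fun n => by exact_mod_cast one_le_card_saws hc v n)
    (fun m n => ?_) hμ n
  rw [mul_comm]
  exact_mod_cast card_saws_add_le v m fun y => (card_saws_eq hvt y v n).le

theorem one_le_of_tendsto_card_saws (hc : G.Connected) {v : V}
    (hμ : Tendsto (fun n : ℕ => ((saws G v n).card : ℝ) ^ ((1 : ℝ) / n)) atTop (nhds μ)) :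
    1 ≤ μ :=
  ge_of_tendsto' hμ fun n =>
    Real.one_le_rpow (by exact_mod_cast one_le_card_saws hc v n) (by positivity)

end Growth

section ReachableAvoiding

variable {V : Type*} {G H : SimpleGraph V} {a b c s t w y : V} {l : List V}

/-- `a` and `b` lie in the same component of `G - c`. As a relation in `a` and `b` it is reflexive
only away from `c`: no vertex is related to `c` itself. -/
def ReachableAvoiding (G : SimpleGraph V) (c a b : V) : Prop :=
  ∃ p : G.Walk a b, c ∉ p.support

namespace ReachableAvoiding

theorem refl (h : a ≠ c) : ReachableAvoiding G c a a :=
  ⟨SimpleGraph.Walk.nil, by simpa using h.symm⟩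

theorem symm (h : ReachableAvoiding G c a b) : ReachableAvoiding G c b a := by
  obtain ⟨p, hp⟩ := h
  exact ⟨p.reverse, by simpa using hp⟩

theorem trans (h : ReachableAvoiding G c a b) (h' : ReachableAvoiding G c b s) :
    ReachableAvoiding G c a s := by
  obtain ⟨p, hp⟩ := h
  obtain ⟨q, hq⟩ := h'
  refine ⟨p.append q, ?_⟩
  rw [SimpleGraph.Walk.mem_support_append_iff]
  exact not_or_intro hp hq

theorem ne_left (h : ReachableAvoiding G c a b) : a ≠ c := by
  rintro rfl
  obtain ⟨p, hp⟩ := h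
  exact hp p.start_mem_support

theorem ne_right (h : ReachableAvoiding G c a b) : b ≠ c :=
  h.symm.ne_left

theorem map (γ : G ≃g H) (h : ReachableAvoiding G c a b) :
    ReachableAvoiding H (γ c) (γ a) (γ b) := by
  obtain ⟨p, hp⟩ := h
  refine ⟨p.map γ.toHom, ?_⟩
  rw [SimpleGraph.Walk.support_map]
  exact fun hc => hp ((List.mem_map_of_injective γ.injective).1 hc)

end ReachableAvoiding

theorem reachableAvoiding_map_iff (γ : G ≃g H) :
    ReachableAvoiding H (γ c) (γ a) (γ b) ↔ ReachableAvoiding G c a b :=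
  ⟨fun h => by simpa using h.map γ.symm, fun h => h.map γ⟩

theorem reachableAvoiding_of_isChain (h : (a :: l).IsChain G.Adj) (hc : c ∉ a :: l)
    (hs : s ∈ a :: l) (ht : t ∈ a :: l) : ReachableAvoiding G c s t := by
  classical
  obtain ⟨p, hp⟩ := exists_walk_of_isChain h
  rw [← hp] at hc hs ht
  have from_start {t : V} (ht : t ∈ p.support) : ReachableAvoiding G c a t :=
    ⟨p.takeUntil t ht, fun h => hc (p.support_takeUntil_subset_support ht h)⟩
  exact (from_start hs).symm.trans (from_start ht)

theorem IsSaw.reachableAvoiding (h : IsSaw G y l) (hs : s ∈ l) (ht : t ∈ l) :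
    ReachableAvoiding G y s t := by
  obtain ⟨x, l, rfl⟩ := List.exists_cons_of_ne_nil (List.ne_nil_of_mem hs)
  obtain ⟨-, h, hy⟩ := isSaw_cons.1 h
  exact reachableAvoiding_of_isChain h.1 hy hs ht

theorem ReachableAvoiding.exists_isSaw (h : ReachableAvoiding G c a b) :
    ∃ l, IsSaw G a l ∧ l.getLastD a = b ∧ c ∉ a :: l := by
  classical
  obtain ⟨p, hp⟩ := h
  refine ⟨_, isSaw_tail_support p.bypass_isPath, getLastD_tail_support _, ?_⟩
  rw [SimpleGraph.Walk.cons_tail_support]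
  exact fun h => hp (p.support_bypass_subset_support h)

theorem exists_adj_reachableAvoiding (hc : G.Connected) (hb : b ≠ y) :
    ∃ z, G.Adj y z ∧ ReachableAvoiding G y b z := by
  obtain ⟨l, hl, rfl⟩ := exists_isSaw_getLastD_eq (hc.preconnected y b)
  cases l with
  | nil => exact absurd rfl hb
  | cons z l => exact ⟨z, (isSaw_cons.1 hl).1,
      hl.reachableAvoiding (getLastD_mem_of_ne_nil y (List.cons_ne_nil z l)) List.mem_cons_self⟩

theorem ReachableAvoiding.swap (hc : G.Connected) (h : ReachableAvoiding G y a t)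
    (hw : ¬ReachableAvoiding G y a w) (hwy : w ≠ y) : ReachableAvoiding G w y t := by
  obtain ⟨l, hl, rfl⟩ := exists_isSaw_getLastD_eq (hc.preconnected y t)
  have hlast : l.getLastD y ∈ l :=
    getLastD_mem_of_ne_nil y (by rintro rfl; exact h.ne_right rfl)
  have hwl : w ∉ l := fun hm => hw (h.trans (hl.reachableAvoiding hlast hm))
  exact reachableAvoiding_of_isChain hl.1 (by simp [hwy, hwl]) List.mem_cons_self
    List.getLastD_mem_cons

theorem reachableAvoiding_of_dist_le (hc : G.Connected) (h : G.dist a b ≤ G.dist a c)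
    (hbc : b ≠ c) : ReachableAvoiding G c a b := by
  classical
  obtain ⟨p, hp⟩ := hc.exists_walk_length_eq_dist a b
  refine ⟨p, fun hm => h.not_gt ?_⟩
  calc G.dist a c ≤ (p.takeUntil c hm).length := SimpleGraph.dist_le _
    _ < p.length := SimpleGraph.Walk.length_takeUntil_lt_length hm hbc.symm
    _ = G.dist a b := hp

/-- Removing some vertex of `G` disconnects two of the remaining ones. -/
def HasCutVertex (G : SimpleGraph V) : Prop :=
  ∃ c a b : V, a ≠ c ∧ b ≠ c ∧ ¬ReachableAvoiding G c a b

/-- At every vertex `y` and for every `a` some neighbour of `y` is not on the side of `a`, that is,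
not in the component of `a` in `G - y`. This is how cut vertices are used in a transitive graph. -/
def CutsEverywhere (G : SimpleGraph V) : Prop :=
  ∀ y a : V, ∃ z, G.Adj y z ∧ ¬ReachableAvoiding G y a z

theorem HasCutVertex.cutsEverywhere (hc : G.Connected)
    (hvt : ∀ u w : V, ∃ γ : G ≃g G, γ u = w) (hcut : HasCutVertex G) : CutsEverywhere G := by
  intro y a
  obtain ⟨c, s, t, hs, ht, hst⟩ := hcut
  obtain ⟨γ, rfl⟩ := hvt c y
  rw [← reachableAvoiding_map_iff γ] at hst
  obtain ⟨p, hp, hsp⟩ := exists_adj_reachableAvoiding hc (γ.injective.ne hs)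
  obtain ⟨q, hq, htq⟩ := exists_adj_reachableAvoiding hc (γ.injective.ne ht)
  by_cases hap : ReachableAvoiding G (γ c) a p
  · exact ⟨q, hq, fun haq => hst (hsp.trans (hap.symm.trans (haq.trans htq.symm)))⟩
  · exact ⟨p, hp, hap⟩

end ReachableAvoiding

section Away

open Finset.HasAntidiagonal (antidiagonal mem_antidiagonal)

variable {V : Type*} {G H : SimpleGraph V} {a a' o s t w x y : V} {l : List V} {n : ℕ}

/-- `l` is a self-avoiding walk of `H` from `y` that never enters the side of `a` at `y`, that is,
the component of `a` in `G - y`. Here `H` is either `G` or its augmentation. -/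
def IsAway (G H : SimpleGraph V) (y a : V) (l : List V) : Prop :=
  IsSaw H y l ∧ ∀ t ∈ l, ¬ReachableAvoiding G y a t

theorem IsSaw.isAway (h : IsSaw G y l) (ht : t ∈ l) (hat : ¬ReachableAvoiding G y a t) :
    IsAway G G y a l :=
  ⟨h, fun _ hs has => hat (has.trans (h.reachableAvoiding hs ht))⟩

theorem IsAway.mono (hGH : G ≤ H) (h : IsAway G G y a l) : IsAway G H y a l :=
  ⟨h.1.mono hGH, h.2⟩

theorem IsSaw.isAway_cons (h : IsSaw G x l) (hadj : G.Adj y x) (hy : y ∉ l)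
    (hax : ¬ReachableAvoiding G y a x) : IsAway G G y a (x :: l) :=
  (isSaw_cons.2 ⟨hadj, h, by simp [hadj.ne, hy]⟩).isAway List.mem_cons_self hax

theorem IsAway.append (hl : IsSaw G o l) (hy : l.getLastD o = y) (hyo : y ≠ o)
    (hay : ¬ReachableAvoiding G o a' y) {l' : List V} (hl' : IsAway G G y a l')
    (hao : ReachableAvoiding G y a o) : IsAway G G o a' (l ++ l') := by
  have hne : l ≠ [] := by rintro rfl; exact hyo hy.symm
  obtain ⟨l, z, rfl⟩ := (List.eq_nil_or_concat l).resolve_left hne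
  rw [List.concat_eq_append, List.getLastD_concat] at hy
  subst hy
  rw [List.concat_eq_append] at hl ⊢
  have hsaw : IsSaw G o ((l ++ [z]) ++ l') := by
    refine isSaw_append.2 ⟨hl, by simpa using hl'.1, fun t ht htl' => ?_⟩
    rcases List.mem_append.1 (List.cons_append ▸ ht) with ht | ht
    · have hz : z ∉ o :: l := fun hz => (isSaw_append.1 hl).2.2 z hz List.mem_cons_self
      exact hl'.2 t htl' (hao.trans (reachableAvoiding_of_isChain (isSaw_append.1 hl).1.1 hz
        List.mem_cons_self ht))
    · obtain rfl := List.mem_singleton.1 ht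
      exact (List.nodup_cons.1 hl'.1.2).1 htl'
  exact hsaw.isAway (t := z) (by simp) hay

open Classical in
/-- The finite set of the `n`-step walks in `IsAway G H y a`. -/
noncomputable def awaySaws (G H : SimpleGraph V) [H.LocallyFinite] (y a : V) (n : ℕ) :
    Finset (List V) :=
  (saws H y n).filter fun l => ∀ t ∈ l, ¬ReachableAvoiding G y a t

theorem mem_awaySaws [H.LocallyFinite] :
    l ∈ awaySaws G H y a n ↔ IsAway G H y a l ∧ l.length = n := by
  simp only [awaySaws, Finset.mem_filter, mem_saws, IsAway]
  tauto

theorem card_awaySaws_le [H.LocallyFinite] : (awaySaws G H y a n).card ≤ (saws H y n).card := by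
  classical
  exact Finset.card_filter_le _ _

variable [G.LocallyFinite]

theorem card_awaySaws_map (γ : G ≃g G) (y a : V) (n : ℕ) :
    (awaySaws G G (γ y) (γ a) n).card = (awaySaws G G y a n).card := by
  classical
  exact card_filter_saws_map γ y n _ _ fun l => by simp [reachableAvoiding_map_iff]

theorem awaySaws_zero : awaySaws G G y a 0 = {[]} := by
  ext l
  rw [mem_awaySaws, List.length_eq_zero_iff, Finset.mem_singleton, and_iff_right_iff_imp]
  rintro rfl
  exact ⟨isSaw_nil, by simp⟩

theorem card_filter_notMem_saws_le [DecidableEq V] (hadj : G.Adj y x)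
    (hax : ¬ReachableAvoiding G y a x) (n : ℕ) :
    ((saws G x n).filter (y ∉ ·)).card ≤ (awaySaws G G y a (n + 1)).card := by
  refine Finset.card_le_card_of_injOn (List.cons x) (fun l hl => ?_)
    (List.cons_injective.injOn)
  obtain ⟨hl, hy⟩ := Finset.mem_filter.1 (Finset.mem_coe.1 hl)
  obtain ⟨hl, hn⟩ := mem_saws.1 hl
  exact mem_awaySaws.2 ⟨hl.isAway_cons hadj hy hax, by simp [hn]⟩

theorem card_saws_le_awaySaws_add_awaySaws (hadj : G.Adj y x)
    (hax : ¬ReachableAvoiding G y a x) (hay : ¬ReachableAvoiding G x a' y) (n : ℕ) :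
    (saws G x n).card ≤ (awaySaws G G y a (n + 1)).card + (awaySaws G G x a' n).card := by
  classical
  rw [← Finset.card_filter_add_card_filter_not (y ∉ ·)]
  refine Nat.add_le_add (card_filter_notMem_saws_le hadj hax n)
    (Finset.card_le_card fun l hl => ?_)
  obtain ⟨hl, hy⟩ := Finset.mem_filter.1 hl
  obtain ⟨hl, hn⟩ := mem_saws.1 hl
  exact mem_awaySaws.2 ⟨hl.isAway (not_not.1 hy) hay, hn⟩

open Classical in
/-- The finite set of the `n`-step self-avoiding walks of `G` from `y` to `o`. -/
noncomputable def sawsTo (G : SimpleGraph V) [G.LocallyFinite] (y o : V) (n : ℕ) :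
    Finset (List V) :=
  (saws G y n).filter fun l => l.getLastD y = o

theorem mem_sawsTo :
    l ∈ sawsTo G y o n ↔ (IsSaw G y l ∧ l.length = n) ∧ l.getLastD y = o := by
  simp only [sawsTo, Finset.mem_filter, mem_saws]

theorem sawsTo_zero (h : y ≠ o) : sawsTo G y o 0 = ∅ := by
  refine Finset.eq_empty_of_forall_notMem fun l hl => ?_
  obtain ⟨⟨-, hn⟩, ho⟩ := mem_sawsTo.1 hl
  obtain rfl := List.length_eq_zero_iff.1 hn
  exact h ho

theorem exists_eq_append_of_mem_sawsTo (hyo : y ≠ o) (h : l ∈ sawsTo G y o n) :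
    ∃ l', l = l' ++ [o] ∧ o ∉ l' := by
  obtain ⟨⟨hl, -⟩, ho⟩ := mem_sawsTo.1 h
  have hne : l ≠ [] := by rintro rfl; exact hyo ho
  obtain ⟨l', z, rfl⟩ := (List.eq_nil_or_concat l).resolve_left hne
  rw [List.concat_eq_append, List.getLastD_concat] at ho
  subst ho
  rw [List.concat_eq_append] at hl ⊢
  exact ⟨l', rfl, fun hm => (isSaw_append.1 hl).2.2 z (List.mem_cons_of_mem y hm)
    List.mem_cons_self⟩

theorem cons_reverse_tail (y : V) (l : List V) :
    l.getLastD y :: (y :: l).reverse.tail = (y :: l).reverse := by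
  rcases List.eq_nil_or_concat l with rfl | ⟨l, z, rfl⟩ <;> simp

theorem card_sawsTo_le_comm (y o : V) (n : ℕ) :
    (sawsTo G y o n).card ≤ (sawsTo G o y n).card := by
  refine Finset.card_le_card_of_injOn (fun l => (y :: l).reverse.tail) (fun l hl => ?_) ?_
  · obtain ⟨⟨hl, hn⟩, ho⟩ := mem_sawsTo.1 hl
    have hrev := cons_reverse_tail y l
    rw [ho] at hrev
    refine mem_sawsTo.2 ⟨⟨?_, by simp [hn]⟩, ?_⟩
    · rw [IsSaw, hrev, List.isChain_reverse, List.nodup_reverse]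
      exact ⟨hl.1.imp fun _ _ h => h.symm, hl.2⟩
    · rw [← List.getLastD_cons (a := o), hrev]
      simp
  · intro l hl l' hl' h
    have hrev := cons_reverse_tail y l
    have hrev' := cons_reverse_tail y l'
    rw [(mem_sawsTo.1 hl).2] at hrev
    have h : (y :: l).reverse.tail = (y :: l').reverse.tail := h
    rw [(mem_sawsTo.1 hl').2, ← h, hrev] at hrev'
    exact (List.cons.inj (List.reverse_injective hrev')).2

theorem card_sawsTo_comm (y o : V) (n : ℕ) : (sawsTo G y o n).card = (sawsTo G o y n).card :=
  (card_sawsTo_le_comm y o n).antisymm (card_sawsTo_le_comm o y n)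

theorem card_filter_mem_saws_le [DecidableEq V] (y o : V) (n : ℕ) :
    ((saws G y n).filter (o ∈ ·)).card ≤
      ∑ ij ∈ antidiagonal n, (sawsTo G y o ij.1).card * (saws G o ij.2).card := by
  have hsub : (saws G y n).filter (o ∈ ·) ⊆ (antidiagonal n).biUnion fun ij =>
      (sawsTo G y o ij.1 ×ˢ saws G o ij.2).image fun z => z.1 ++ z.2 := by
    intro l hl
    obtain ⟨hl, ho⟩ := Finset.mem_filter.1 hl
    obtain ⟨hsaw, rfl⟩ := mem_saws.1 hl
    obtain ⟨l₁, l₂, rfl⟩ := List.append_of_mem ho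
    rw [← List.singleton_append, ← List.append_assoc] at hsaw ⊢
    obtain ⟨h₁, h₂, -⟩ := isSaw_append.1 hsaw
    have hlast : (l₁ ++ [o]).getLastD y = o := by simp
    rw [hlast] at h₂
    refine Finset.mem_biUnion.2 ⟨((l₁ ++ [o]).length, l₂.length), ?_, Finset.mem_image.2 (b := _)
      ⟨(l₁ ++ [o], l₂), Finset.mem_product.2 ⟨mem_sawsTo.2 ⟨⟨h₁, rfl⟩, hlast⟩,
        mem_saws.2 ⟨h₂, rfl⟩⟩, rfl⟩⟩
    exact mem_antidiagonal.2 List.length_append.symm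
  refine (Finset.card_le_card hsub).trans (Finset.card_biUnion_le.trans
    (Finset.sum_le_sum fun ij _ => ?_))
  exact Finset.card_image_le.trans_eq (Finset.card_product _ _)

theorem card_saws_le_awaySaws_add_sum (hadj : G.Adj o y) (hoy : ¬ReachableAvoiding G o a y)
    (n : ℕ) : (saws G y n).card ≤ (awaySaws G G o a (n + 1)).card +
      ∑ ij ∈ antidiagonal n, (sawsTo G y o ij.1).card * (saws G o ij.2).card := by
  classical
  rw [← Finset.card_filter_add_card_filter_not (o ∉ ·)]
  refine Nat.add_le_add (card_filter_notMem_saws_le hadj hoy n) ?_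
  simp only [not_not]
  exact card_filter_mem_saws_le y o n

theorem sum_card_sawsTo_mul_card_awaySaws_le (hao : ReachableAvoiding G y a o)
    (hay : ¬ReachableAvoiding G o a' y) (n : ℕ) :
    ∑ ij ∈ antidiagonal n, (sawsTo G o y ij.1).card * (awaySaws G G y a ij.2).card ≤
      (awaySaws G G o a' n).card := by
  classical
  simp only [← Finset.card_product]
  rw [← Finset.card_sigma]
  refine Finset.card_le_card_of_injOn (fun z => z.2.1 ++ z.2.2) ?_ ?_
  · rintro ⟨⟨i, j⟩, P, Q⟩ hz
    simp only [Finset.coe_sigma, Set.mem_sigma_iff, Finset.mem_coe, mem_antidiagonal,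
      Finset.mem_product, mem_sawsTo, mem_awaySaws] at hz ⊢
    obtain ⟨hij, ⟨⟨hP, hPi⟩, hPy⟩, hQ, hQj⟩ := hz
    exact ⟨IsAway.append hP hPy hao.ne_right.symm hay hQ hao, by simp [hPi, hQj, hij]⟩
  · rintro ⟨⟨i, j⟩, P, Q⟩ hz ⟨⟨i', j'⟩, P', Q'⟩ hz' h
    simp only [Finset.coe_sigma, Set.mem_sigma_iff, Finset.mem_coe, Finset.mem_product,
      mem_awaySaws] at hz hz' h
    obtain ⟨-, hP, hQ, hQj⟩ := hz
    obtain ⟨-, hP', hQ', hQj'⟩ := hz'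
    obtain ⟨P₀, rfl, hy⟩ := exists_eq_append_of_mem_sawsTo hao.ne_right hP
    obtain ⟨P₀', rfl, hy'⟩ := exists_eq_append_of_mem_sawsTo hao.ne_right hP'
    have hyQ : y ∉ Q := (List.nodup_cons.1 hQ.1.2).1
    rw [List.append_assoc, List.append_assoc, List.singleton_append, List.singleton_append,
      List.append_cons_inj_of_notMem hy hyQ] at h
    obtain ⟨rfl, -, rfl⟩ := h
    obtain rfl := (mem_sawsTo.1 hP).1.2
    obtain rfl := (mem_sawsTo.1 hP').1.2
    obtain rfl := hQj
    obtain rfl := hQj'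
    rfl

end Away

section Renewal

open Finset.HasAntidiagonal (antidiagonal mem_antidiagonal)

variable {f p s : ℕ → ℝ} {μ : ℝ}

theorem summable_and_tsum_lt_one_of_sum_antidiagonal_le (hf : Summable f) (hf_nonneg : ∀ n, 0 ≤ f n)
    (hp : ∀ n, 0 ≤ p n) (hf₀ : f 0 = 1) (hp₀ : p 0 = 0)
    (hpf : ∀ n, ∑ ij ∈ antidiagonal n, p ij.1 * f ij.2 ≤ f n) :
    Summable p ∧ ∑' n, p n < 1 := by
  have hle n : p n ≤ f n := by
    refine le_trans ?_ (hpf n)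
    simpa [hf₀] using Finset.single_le_sum (f := fun ij : ℕ × ℕ => p ij.1 * f ij.2)
      (s := antidiagonal n) (fun ij _ => mul_nonneg (hp _) (hf_nonneg _)) (a := (n, 0)) (by simp)
  have hps : Summable p := .of_nonneg_of_le hp hle hf
  set q : ℕ → ℝ := fun n => ∑ ij ∈ antidiagonal n, p ij.1 * f ij.2
  have hq : Summable q :=
    (summable_norm_sum_mul_antidiagonal_of_summable_norm hps.norm hf.norm).of_norm
  have hq₀ : q 0 = 0 := by simp [q, hp₀]
  have hmul : (∑' n, p n) * ∑' n, f n + 1 ≤ ∑' n, f n :=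
    calc (∑' n, p n) * ∑' n, f n + 1 = ∑' n, q (n + 1) + 1 := by
          rw [tsum_mul_tsum_eq_tsum_sum_antidiagonal_of_summable_norm hps.norm hf.norm,
            hq.tsum_eq_zero_add, hq₀, zero_add]
      _ ≤ ∑' n, f (n + 1) + 1 := by
          gcongr
          · exact (summable_nat_add_iff 1).2 hq
          · exact (summable_nat_add_iff 1).2 hf
          · exact hpf _
      _ = ∑' n, f n := by rw [hf.tsum_eq_zero_add, hf₀, add_comm]
  refine ⟨hps, not_le.1 fun h => ?_⟩
  have hF : 0 ≤ ∑' n, f n := tsum_nonneg hf_nonneg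
  linarith [le_mul_of_one_le_left hF h]

theorem sum_range_sum_antidiagonal_le (hp : Summable p) (hp_nonneg : ∀ n, 0 ≤ p n)
    (hs : ∀ n, 0 ≤ s n) (N : ℕ) :
    ∑ n ∈ Finset.range N, ∑ ij ∈ antidiagonal n, p ij.1 * s ij.2 ≤
      (∑' n, p n) * ∑ n ∈ Finset.range N, s n := by
  simp only [Finset.Nat.sum_antidiagonal_eq_sum_range_succ_mk]
  rw [Finset.sum_range_diag_flip N fun i j => p i * s j]
  calc ∑ i ∈ Finset.range N, ∑ j ∈ Finset.range (N - i), p i * s j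
      ≤ ∑ i ∈ Finset.range N, ∑ j ∈ Finset.range N, p i * s j := by
        gcongr with i _
        · exact fun j _ _ => mul_nonneg (hp_nonneg i) (hs j)
        · exact Nat.sub_le N i
    _ = (∑ i ∈ Finset.range N, p i) * ∑ n ∈ Finset.range N, s n := by rw [Finset.sum_mul_sum]
    _ ≤ (∑' n, p n) * ∑ n ∈ Finset.range N, s n :=
        mul_le_mul_of_nonneg_right (hp.sum_le_tsum _ fun i _ => hp_nonneg i)
          (Finset.sum_nonneg fun i _ => hs i)

theorem not_summable_of_renewal (hμ : 0 ≤ μ) (hf : ∀ n, 0 ≤ f n) (hp : ∀ n, 0 ≤ p n)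
    (hs : ∀ n, 1 ≤ s n) (hf₀ : f 0 = 1) (hp₀ : p 0 = 0)
    (hsf : ∀ n, s n ≤ μ * f (n + 1) + ∑ ij ∈ antidiagonal n, p ij.1 * s ij.2)
    (hpf : ∀ n, ∑ ij ∈ antidiagonal n, p ij.1 * f ij.2 ≤ f n) : ¬Summable f := by
  intro hfs
  obtain ⟨hps, hp1⟩ := summable_and_tsum_lt_one_of_sum_antidiagonal_le hfs hf hp hf₀ hp₀ hpf
  have hs_nonneg n : 0 ≤ s n := zero_le_one.trans (hs n)
  obtain ⟨N, hN⟩ := exists_nat_gt ((μ * ∑' n, f (n + 1)) / (1 - ∑' n, p n))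
  rw [div_lt_iff₀ (sub_pos.2 hp1)] at hN
  have hNs : (N : ℝ) ≤ ∑ n ∈ Finset.range N, s n := by
    simpa using Finset.card_nsmul_le_sum (Finset.range N) s 1 fun n _ => hs n
  have hsN : ∑ n ∈ Finset.range N, s n ≤
      μ * ∑' n, f (n + 1) + (∑' n, p n) * ∑ n ∈ Finset.range N, s n :=
    calc ∑ n ∈ Finset.range N, s n
        ≤ μ * ∑ n ∈ Finset.range N, f (n + 1) +
          ∑ n ∈ Finset.range N, ∑ ij ∈ antidiagonal n, p ij.1 * s ij.2 := by
          rw [Finset.mul_sum, ← Finset.sum_add_distrib]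
          exact Finset.sum_le_sum fun n _ => hsf n
      _ ≤ _ := by
          gcongr
          · exact ((summable_nat_add_iff 1).2 hfs).sum_le_tsum _ fun n _ => hf _
          · exact sum_range_sum_antidiagonal_le hps hp hs_nonneg N
  nlinarith

variable {V : Type*} {G : SimpleGraph V} [G.LocallyFinite] {y a o : V}

theorem not_summable_card_awaySaws_of_reachableAvoiding
    (hvt : ∀ u w : V, ∃ γ : G ≃g G, γ u = w) (hμ : 0 < μ)
    (hsaws : ∀ x n, μ ^ n ≤ (saws G x n).card) (γ : G ≃g G) (hadj : G.Adj (γ y) y)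
    (hγa : ¬ReachableAvoiding G (γ y) (γ a) y) (haγ : ReachableAvoiding G y a (γ y)) :
    ¬Summable fun n => ((awaySaws G G y a n).card : ℝ) / μ ^ n := by
  have hconv (g : ℕ → ℝ) (n : ℕ) :
      ∑ ij ∈ antidiagonal n, (sawsTo G y (γ y) ij.1).card / μ ^ ij.1 * (g ij.2 / μ ^ ij.2) =
        (∑ ij ∈ antidiagonal n, (sawsTo G y (γ y) ij.1).card * g ij.2) / μ ^ n := by
    rw [Finset.sum_div]
    refine Finset.sum_congr rfl fun ij hij => ?_
    rw [← mem_antidiagonal.1 hij, pow_add, div_mul_div_comm]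
  apply not_summable_of_renewal (μ := μ) (p := fun n => (sawsTo G y (γ y) n).card / μ ^ n)
    (s := fun n => (saws G y n).card / μ ^ n) hμ.le
  · exact fun n => by positivity
  · exact fun n => by positivity
  · exact fun n => (one_le_div (by positivity)).2 (hsaws y n)
  · simp [awaySaws_zero]
  · simp [sawsTo_zero hadj.ne']
  · intro n
    have h := card_saws_le_awaySaws_add_sum hadj hγa n
    simp only [card_awaySaws_map, card_saws_eq hvt (γ y) y] at h
    rw [hconv fun n => (saws G y n).card, pow_succ', ← div_div, mul_div_assoc',
      mul_div_cancel₀ _ hμ.ne', ← add_div]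
    gcongr
    exact_mod_cast h
  · intro n
    have h := sum_card_sawsTo_mul_card_awaySaws_le haγ hγa n
    simp only [card_awaySaws_map, card_sawsTo_comm (γ y) y] at h
    rw [hconv fun n => (awaySaws G G y a n).card]
    gcongr
    exact_mod_cast h

theorem not_summable_card_awaySaws_of_not_reachableAvoiding (hμ : 0 < μ)
    (hsaws : ∀ x n, μ ^ n ≤ (saws G x n).card) (γ : G ≃g G) (hadj : G.Adj y (γ y))
    (haγ : ¬ReachableAvoiding G y a (γ y)) (hγa : ¬ReachableAvoiding G (γ y) (γ a) y) :
    ¬Summable fun n => ((awaySaws G G y a n).card : ℝ) / μ ^ n := by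
  intro hsum
  have hone n : 1 ≤ μ * ((awaySaws G G y a (n + 1)).card / μ ^ (n + 1)) +
      (awaySaws G G y a n).card / μ ^ n := by
    have h := card_saws_le_awaySaws_add_awaySaws hadj haγ hγa n
    rw [card_awaySaws_map] at h
    rw [pow_succ', ← div_div, mul_div_assoc', mul_div_cancel₀ _ hμ.ne', ← add_div,
      one_le_div (by positivity)]
    exact (hsaws (γ y) n).trans (by exact_mod_cast h)
  have hzero := hsum.tendsto_atTop_zero
  have hlim := (((tendsto_add_atTop_iff_nat 1).2 hzero).const_mul μ).add hzero
  rw [mul_zero, add_zero] at hlim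
  exact zero_lt_one.not_ge (ge_of_tendsto' hlim hone)

theorem CutsEverywhere.not_summable_card_awaySaws_div_pow (hcut : CutsEverywhere G)
    (hvt : ∀ u w : V, ∃ γ : G ≃g G, γ u = w) (hμ : 0 < μ)
    (hsaws : ∀ x n, μ ^ n ≤ (saws G x n).card) (y a : V) :
    ¬Summable fun n => ((awaySaws G G y a n).card : ℝ) / μ ^ n := by
  obtain ⟨x, hadj, hax⟩ := hcut y a
  obtain ⟨γ, rfl⟩ := hvt y x
  by_cases hγa : ReachableAvoiding G (γ y) (γ a) y
  · refine not_summable_card_awaySaws_of_reachableAvoiding hvt hμ hsaws γ.symm ?_ ?_ ?_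
    · rw [← γ.map_adj_iff]
      simpa using hadj
    · rw [← reachableAvoiding_map_iff γ]
      simpa using hax
    · rw [← reachableAvoiding_map_iff γ]
      simpa using hγa
  · exact not_summable_card_awaySaws_of_not_reachableAvoiding hμ hsaws γ hadj hax hγa

end Renewal

section Uniform

variable {V : Type*} {G : SimpleGraph V}

theorem exists_uniform_bound [G.LocallyFinite] (hc : G.Connected)
    (hvt : ∀ u w : V, ∃ γ : G ≃g G, γ u = w) {p : ℕ → V → V → V → Prop}
    (hmono : ∀ x u w, Monotone (p · x u w))
    (hmap : ∀ (γ : G ≃g G) n x u w, p n x u w → p n (γ x) (γ u) (γ w))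
    (hp : ∀ x u w, ∃ n, p n x u w) (r : ℕ) :
    ∃ N, ∀ x u w, G.dist x u ≤ r → G.dist x w ≤ r → p N x u w := by
  obtain ⟨o⟩ := hc.nonempty
  choose n hn using hp o
  set B := (finite_setOf_dist_le hc o r).toFinset
  refine ⟨B.sup fun u => B.sup (n u), fun x u w hu hw => ?_⟩
  obtain ⟨γ, rfl⟩ := hvt o x
  obtain ⟨u, rfl⟩ := γ.surjective u
  obtain ⟨w, rfl⟩ := γ.surjective w
  rw [dist_map_iso] at hu hw
  refine hmap γ _ _ _ _ (hmono o u w ?_ (hn u w))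
  calc n u w ≤ B.sup (n u) := Finset.le_sup (by simpa [B] using hw)
    _ ≤ B.sup fun u => B.sup (n u) :=
      Finset.le_sup (f := fun u => B.sup (n u)) (by simpa [B] using hu)

theorem exists_bound_length_isSaw_avoiding [G.LocallyFinite] (hc : G.Connected)
    (hvt : ∀ u w : V, ∃ γ : G ≃g G, γ u = w) (r : ℕ) :
    ∃ L, ∀ y u w, G.dist y u ≤ r → G.dist y w ≤ r → ReachableAvoiding G w y u →
      ∃ l, IsSaw G y l ∧ l.getLastD y = u ∧ w ∉ y :: l ∧ l.length ≤ L := by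
  refine exists_uniform_bound (p := fun n y u w => ReachableAvoiding G w y u →
    ∃ l, IsSaw G y l ∧ l.getLastD y = u ∧ w ∉ y :: l ∧ l.length ≤ n) hc hvt
    (fun y u w m n hmn hm h => ?_) (fun γ n y u w hn h => ?_) (fun y u w => ?_) r
  · obtain ⟨l, hl, hu, hw, hlen⟩ := hm h
    exact ⟨l, hl, hu, hw, hlen.trans hmn⟩
  · obtain ⟨l, hl, rfl, hw, hlen⟩ := hn ((reachableAvoiding_map_iff γ).1 h)
    refine ⟨l.map γ, (isSaw_map_iff γ).2 hl, List.getLastD_map .., ?_, by simpa using hlen⟩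
    rwa [← List.map_cons, List.mem_map_of_injective γ.injective]
  · by_cases h : ReachableAvoiding G w y u
    · obtain ⟨l, hl, hu, hw⟩ := h.exists_isSaw
      exact ⟨l.length, fun _ => ⟨l, hl, hu, hw, le_rfl⟩⟩
    · exact ⟨0, fun h' => absurd h' h⟩

end Uniform

section CutVertex

variable {V : Type*} {G Gbar : SimpleGraph V} {a q w y z : V} {δ l : List V}

theorem CutsEverywhere.exists_dist_gt (hcut : CutsEverywhere G) (hc : G.Connected)
    (hzy : z ≠ y) (k : ℕ) : ∃ x, ReachableAvoiding G y z x ∧ k < G.dist y x := by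
  induction k with
  | zero => exact ⟨z, .refl hzy, hc.pos_dist_of_ne hzy.symm⟩
  | succ k ih =>
    obtain ⟨x, hzx, hk⟩ := ih
    obtain ⟨x', hxx', hyx'⟩ := hcut x y
    have hx'y : y ≠ x' := by
      rintro rfl
      exact hyx' (.refl hzx.ne_right.symm)
    have hadj : ReachableAvoiding G y x x' :=
      reachableAvoiding_of_isChain (l := [x']) (by simpa using hxx')
        (by simp [hx'y, hzx.ne_right.symm]) (by simp) (by simp)
    refine ⟨x', hzx.trans hadj, (Nat.succ_le_of_lt hk).trans_lt (not_le.1 fun h => hyx' ?_)⟩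
    exact reachableAvoiding_of_dist_le hc h hxx'.ne'

theorem CutsEverywhere.exists_dist_gt_le [G.LocallyFinite] (hcut : CutsEverywhere G)
    (hc : G.Connected) (hvt : ∀ u w : V, ∃ γ : G ≃g G, γ u = w) (k : ℕ) :
    ∃ D, ∀ y z, G.Adj y z →
      ∃ x, ReachableAvoiding G y z x ∧ k < G.dist y x ∧ G.dist y x ≤ D := by
  suffices ∃ D, ∀ y z w, G.dist y z ≤ 1 → G.dist y w ≤ 1 → z ≠ y →
      ∃ x, ReachableAvoiding G y z x ∧ k < G.dist y x ∧ G.dist y x ≤ D by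
    obtain ⟨D, hD⟩ := this
    exact ⟨D, fun y z hyz =>
      hD y z y (SimpleGraph.dist_eq_one_iff_adj.2 hyz).le (by simp) hyz.ne'⟩
  refine exists_uniform_bound (p := fun n y z _ => z ≠ y →
    ∃ x, ReachableAvoiding G y z x ∧ k < G.dist y x ∧ G.dist y x ≤ n) hc hvt
    (fun y z _ m n hmn hm hzy => ?_) (fun γ n y z _ hn hzy => ?_) (fun y z _ => ?_) 1
  · obtain ⟨x, hx, hk, hm⟩ := hm hzy
    exact ⟨x, hx, hk, hm.trans hmn⟩
  · obtain ⟨x, hx, hk⟩ := hn (ne_of_apply_ne γ hzy)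
    exact ⟨γ x, hx.map γ, by rwa [dist_map_iso]⟩
  · by_cases hzy : z = y
    · exact ⟨0, absurd hzy⟩
    · obtain ⟨x, hx, hk⟩ := hcut.exists_dist_gt hc hzy k
      exact ⟨_, fun _ => ⟨x, hx, hk, le_rfl⟩⟩

theorem one_le_card_awaySaws [Gbar.LocallyFinite] (hcut : CutsEverywhere G) (hc : G.Connected)
    (hGB : G ≤ Gbar) (y a : V) (n : ℕ) : 1 ≤ (awaySaws G Gbar y a n).card := by
  obtain ⟨z, hyz, haz⟩ := hcut y a
  obtain ⟨x, hzx, hn⟩ := hcut.exists_dist_gt hc hyz.ne' n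
  obtain ⟨l, hl, rfl⟩ := exists_isSaw_getLastD_eq (hc.preconnected y x)
  have hlast : l.getLastD y ∈ l :=
    getLastD_mem_of_ne_nil y (by rintro rfl; exact hzx.ne_right rfl)
  have haway := (hl.isAway hlast fun hax => haz (hax.trans hzx.symm)).mono hGB
  have hlen : n ≤ l.length :=
    hn.le.trans (dist_le_length_of_isChain hl.1 List.getLastD_mem_cons)
  exact Finset.card_pos.2 ⟨l.take n, mem_awaySaws.2 ⟨⟨haway.1.take n,
    fun t ht => haway.2 t (List.mem_of_mem_take ht)⟩, by simpa using hlen⟩⟩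

/-- A connector from `z` off the side of `q`: the walk `δ` of `G` followed by the edge from its
endpoint to `w`, which belongs to the augmentation `Gbar` but not to `G`. Everything stays out of
the component of `q` in `G - z`, and the connector has at most `L` steps. -/
structure IsConnector (G Gbar : SimpleGraph V) (L : ℕ) (z q : V) (δ : List V) (w : V) : Prop where
  isAway : IsAway G G z q δ
  adj : Gbar.Adj (δ.getLastD z) w
  not_adj : ¬G.Adj (δ.getLastD z) w
  notMem : w ∉ z :: δ
  not_reachableAvoiding : ¬ReachableAvoiding G z q w
  length_lt : δ.length < L

theorem exists_isConnector [G.LocallyFinite] (hcut : CutsEverywhere G) (hc : G.Connected)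
    (hvt : ∀ u w : V, ∃ γ : G ≃g G, γ u = w) {r : ℕ}
    (hnew : ∀ x, ∃ u w, G.dist x u ≤ r ∧ G.dist x w ≤ r ∧ Gbar.Adj u w ∧ ¬G.Adj u w) :
    ∃ L, ∀ z q, ∃ δ w, IsConnector G Gbar L z q δ w := by
  obtain ⟨D, hD⟩ := hcut.exists_dist_gt_le hc hvt r
  obtain ⟨L, hL⟩ := exists_bound_length_isSaw_avoiding hc hvt (D + r)
  refine ⟨L + 1, fun z q => ?_⟩
  obtain ⟨s, hzs, hqs⟩ := hcut z q
  obtain ⟨x, hsx, hrx, hxD⟩ := hD z s hzs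
  obtain ⟨u, w, hu, hw, huw, huw'⟩ := hnew x
  have hside {t} (ht : G.dist x t ≤ r) : ¬ReachableAvoiding G z q t := fun hqt => by
    have htz : t ≠ z := by
      rintro rfl
      rw [SimpleGraph.dist_comm] at hrx
      exact ht.not_gt hrx
    have hxt := reachableAvoiding_of_dist_le hc
      (by rw [G.dist_comm (u := x) (v := z)]; exact ht.trans hrx.le) htz
    exact hqs (hqt.trans (hsx.trans hxt).symm)
  have hnear {t} (ht : G.dist x t ≤ r) : G.dist z t ≤ D + r :=
    hc.dist_triangle.trans (Nat.add_le_add hxD ht)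
  have connect {u w} (hu : G.dist x u ≤ r) (hw : G.dist x w ≤ r) (huw : Gbar.Adj u w)
      (huw' : ¬G.Adj u w) (h : ReachableAvoiding G w z u) :
      ∃ δ w, IsConnector G Gbar (L + 1) z q δ w := by
    obtain ⟨δ, hδ, rfl, hwδ, hlen⟩ := hL z u w (hnear hu) (hnear hw) h
    refine ⟨δ, w, ⟨⟨hδ, fun t ht hqt => hside hu (hqt.trans (hδ.reachableAvoiding ht ?_))⟩,
      huw, huw', hwδ, hside hw, Nat.lt_succ_of_le hlen⟩⟩
    exact getLastD_mem_of_ne_nil z (List.ne_nil_of_mem ht)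
  rcases le_total (G.dist z u) (G.dist z w) with h | h
  · exact connect hu hw huw huw' (reachableAvoiding_of_dist_le hc h huw.ne)
  · exact connect hw hu huw.symm (fun h => huw' h.symm) (reachableAvoiding_of_dist_le hc h huw.ne')

theorem IsAway.append_cons (hc : G.Connected) (hGB : G ≤ Gbar) {C T : List V}
    (hC : IsAway G G y a C) (hadj : Gbar.Adj (C.getLastD y) w) (hw : w ∉ y :: C) (hz : z ∈ y :: C)
    (haw : ¬ReachableAvoiding G y a w) (hT : IsAway G Gbar w z T) :
    IsAway G Gbar y a (C ++ w :: T) := by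
  have hside {t} (ht : t ∈ y :: C) : ReachableAvoiding G w z t :=
    reachableAvoiding_of_isChain hC.1.1 hw hz ht
  have hdisj : ∀ t ∈ y :: C, t ∉ w :: T := fun t ht htw => by
    rcases List.mem_cons.1 htw with rfl | htT
    · exact hw ht
    · exact hT.2 t htT (hside ht)
  refine ⟨isSaw_append.2 ⟨hC.1.mono hGB, isSaw_cons.2 ⟨hadj, hT.1, hdisj _ List.getLastD_mem_cons⟩,
    hdisj⟩, fun t ht hat => ?_⟩
  rcases List.mem_append.1 ht with ht | ht
  · exact hC.2 t ht hat
  rcases List.mem_cons.1 ht with rfl | ht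
  · exact haw hat
  · have hwy : w ≠ y := by
      rintro rfl
      exact hw List.mem_cons_self
    exact hT.2 t ht ((hside List.mem_cons_self).trans (hat.swap hc haw hwy))

theorem IsConnector.isAway_append {L : ℕ} {P : List V}
    (h : IsConnector G Gbar L z (P.getLastD y) δ w) (hP : IsAway G G y a (P ++ [z])) :
    IsAway G G y a (P ++ [z] ++ δ) ∧ w ∉ y :: (P ++ [z] ++ δ) ∧
      ReachableAvoiding G z (P.getLastD y) y := by
  have hPsaw := isSaw_append.1 hP.1
  have hside {t} (ht : t ∈ y :: P) : ReachableAvoiding G z (P.getLastD y) t :=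
    reachableAvoiding_of_isChain hPsaw.1.1 (fun hz => hPsaw.2.2 z hz List.mem_cons_self)
      List.getLastD_mem_cons ht
  refine ⟨IsAway.append hP.1 (by simp) (hside List.mem_cons_self).ne_right.symm (hP.2 z (by simp))
    h.isAway (hside List.mem_cons_self), fun hw => ?_, hside List.mem_cons_self⟩
  rw [List.append_assoc, ← List.cons_append, List.mem_append] at hw
  exact hw.elim (fun hw => h.not_reachableAvoiding (hside hw)) h.notMem

theorem IsConnector.isAway_append_cons {L : ℕ} {P T : List V} (hc : G.Connected) (hGB : G ≤ Gbar)
    (h : IsConnector G Gbar L z (P.getLastD y) δ w) (hP : IsAway G G y a (P ++ [z]))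
    (hT : IsAway G Gbar w z T) : IsAway G Gbar y a (P ++ [z] ++ δ ++ w :: T) := by
  obtain ⟨hPδ, hw, hy⟩ := h.isAway_append hP
  refine hPδ.append_cons hc hGB ?_ hw (by simp) (fun haw => h.not_reachableAvoiding ?_) hT
  · rw [getLastD_append, List.getLastD_concat]
    exact h.adj
  · exact hy.trans (haw.swap hc (hP.2 z (by simp)) hy.ne_right.symm)

theorem append_cons_inj_of_isChain_of_not_adj {l₁ l₂ T₁ T₂ : List V} {w₁ w₂ : V}
    (h₁ : (y :: l₁).IsChain G.Adj) (h₂ : (y :: l₂).IsChain G.Adj)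
    (hw₁ : ¬G.Adj (l₁.getLastD y) w₁) (hw₂ : ¬G.Adj (l₂.getLastD y) w₂)
    (h : l₁ ++ w₁ :: T₁ = l₂ ++ w₂ :: T₂) : l₁ = l₂ ∧ w₁ = w₂ ∧ T₁ = T₂ := by
  have not_longer {l c T T' : List V} {w w' : V} (hl : (y :: (l ++ c)).IsChain G.Adj)
      (hw : ¬G.Adj (l.getLastD y) w) (h : w :: T = c ++ w' :: T') : c = [] := by
    cases c with
    | nil => rfl
    | cons b c =>
      obtain rfl := (List.cons.inj h).1
      exact absurd (List.isChain_cons_cons.1 (isChain_cons_append.1 hl).2).1 hw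
  rcases List.append_eq_append_iff.1 h with ⟨c, rfl, h'⟩ | ⟨c, rfl, h'⟩
  · obtain rfl := not_longer h₂ hw₁ h'
    simpa using h'
  · obtain rfl := not_longer h₁ hw₂ h'
    simpa [eq_comm] using h'

theorem sum_card_awaySaws_le_mul_card_awaySaws [G.LocallyFinite] [Gbar.LocallyFinite]
    (hc : G.Connected) (hGB : G ≤ Gbar) {L J n : ℕ} (hn : J + L ≤ n) {δ : List V → List V}
    {w : List V → V}
    (hδ : ∀ P, IsConnector G Gbar L (P.getLastD y) (P.dropLast.getLastD y) (δ P) (w P)) :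
    ∑ j ∈ Finset.Icc 1 J, ∑ P ∈ awaySaws G G y a j,
      (awaySaws G Gbar (w P) (P.getLastD y) (n - j - ((δ P).length + 1))).card ≤
      L * (awaySaws G Gbar y a n).card := by
  simp only [← Finset.card_sigma]
  rw [← Finset.card_range L, ← Finset.card_product]
  have split {j : ℕ} {P : List V} (hj : 1 ≤ j) (hP : P ∈ awaySaws G G y a j) :
      ∃ P₀ z, P = P₀ ++ [z] ∧ IsAway G G y a (P₀ ++ [z]) ∧ (P₀ ++ [z]).length = j ∧
        IsConnector G Gbar L z (P₀.getLastD y) (δ P) (w P) := by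
    have hne : P ≠ [] := List.ne_nil_of_length_pos ((mem_awaySaws.1 hP).2 ▸ hj)
    obtain ⟨P₀, z, rfl⟩ := (List.eq_nil_or_concat' P).resolve_left hne
    exact ⟨P₀, z, rfl, (mem_awaySaws.1 hP).1, (mem_awaySaws.1 hP).2, by simpa using hδ (P₀ ++ [z])⟩
  refine Finset.card_le_card_of_injOn
    (fun t => ((δ t.2.1).length, t.2.1 ++ δ t.2.1 ++ w t.2.1 :: t.2.2)) ?_ ?_
  · rintro ⟨j, P, T⟩ ht
    simp only [Finset.coe_sigma, Set.mem_sigma_iff, Finset.mem_coe, Finset.mem_Icc,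
      Finset.mem_product, Finset.mem_range, mem_awaySaws (l := T)] at ht ⊢
    obtain ⟨⟨hj, hjJ⟩, hP, hT, hTn⟩ := ht
    obtain ⟨P₀, z, rfl, haway, rfl, hcon⟩ := split hj hP
    have hlt := hcon.length_lt
    refine ⟨hlt, mem_awaySaws.2 ⟨hcon.isAway_append_cons hc hGB haway (by simpa using hT), ?_⟩⟩
    simp only [List.length_append, List.length_cons, hTn] at hjJ ⊢
    lia
  · rintro ⟨j, P, T⟩ ht ⟨j', P', T'⟩ ht' h
    simp only [Finset.coe_sigma, Set.mem_sigma_iff, Finset.mem_coe, Finset.mem_Icc] at ht ht' h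
    have chain {j : ℕ} {P : List V} (hj : 1 ≤ j) (hP : P ∈ awaySaws G G y a j) :
        (y :: (P ++ δ P)).IsChain G.Adj := by
      obtain ⟨P₀, z, rfl, haway, -, hcon⟩ := split hj hP
      exact (hcon.isAway_append haway).1.1.1
    obtain ⟨hlen, happ⟩ := Prod.mk.inj h
    obtain ⟨hPδ, -, rfl⟩ := append_cons_inj_of_isChain_of_not_adj
      (chain ht.1.1 ht.2.1) (chain ht'.1.1 ht'.2.1)
      (by rw [getLastD_append]; exact (hδ P).not_adj)
      (by rw [getLastD_append]; exact (hδ P').not_adj) happ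
    obtain ⟨rfl, -⟩ := List.append_inj' hPδ hlen
    obtain rfl := (mem_awaySaws.1 ht.2.1).2.symm.trans (mem_awaySaws.1 ht'.2.1).2
    rfl

theorem exists_reachableAvoiding_imp_adj (hcut : CutsEverywhere G) (hc : G.Connected) (y a : V) :
    ∃ b, G.Adj y b ∧ ∀ t, ReachableAvoiding G y a t → ReachableAvoiding G y b t := by
  by_cases ha : a = y
  · obtain ⟨b, hb, -⟩ := hcut y a
    exact ⟨b, hb, fun t ht => absurd ha ht.ne_left⟩
  · obtain ⟨b, hb, hab⟩ := exists_adj_reachableAvoiding hc ha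
    exact ⟨b, hb, fun t ht => hab.symm.trans ht⟩

theorem exists_le_sum_card_awaySaws_div_pow [G.LocallyFinite] {μ : ℝ} (hcut : CutsEverywhere G)
    (hc : G.Connected) (hvt : ∀ u w : V, ∃ γ : G ≃g G, γ u = w) (hμ : 0 < μ)
    (hsaws : ∀ x n, μ ^ n ≤ (saws G x n).card) (B : ℝ) :
    ∃ J, ∀ y a, B ≤ ∑ j ∈ Finset.Icc 1 J, ((awaySaws G G y a j).card : ℝ) / μ ^ j := by
  obtain ⟨J, hJ⟩ := exists_uniform_bound
    (p := fun J y a _ => B ≤ ∑ j ∈ Finset.Icc 1 J, ((awaySaws G G y a j).card : ℝ) / μ ^ j) hc hvt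
    (fun y a _ m n hmn h => h.trans <| Finset.sum_le_sum_of_subset_of_nonneg
      (Finset.Icc_subset_Icc_right hmn) fun _ _ _ => by positivity)
    (fun γ n y a _ h => by simpa only [card_awaySaws_map] using h)
    (fun y a _ => by
      have hdiv := hcut.not_summable_card_awaySaws_div_pow hvt hμ hsaws y a
      rw [← summable_nat_add_iff 1,
        not_summable_iff_tendsto_nat_atTop_of_nonneg fun n => by positivity] at hdiv
      obtain ⟨J, hJ⟩ := (hdiv.eventually_ge_atTop B).exists
      refine ⟨J, hJ.trans_eq ?_⟩
      rw [Finset.range_eq_Ico,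
        Finset.sum_Ico_add' (fun j => ((awaySaws G G y a j).card : ℝ) / μ ^ j) 0 J 1]
      rfl) 1
  refine ⟨J, fun y a => ?_⟩
  obtain ⟨b, hyb, hab⟩ := exists_reachableAvoiding_imp_adj hcut hc y a
  refine (hJ y b y (SimpleGraph.dist_eq_one_iff_adj.2 hyb).le (by simp)).trans ?_
  gcongr with j
  exact fun l hl => by
    simp only [mem_awaySaws] at hl ⊢
    exact ⟨⟨hl.1.1, fun t ht hat => hl.1.2 t ht (hab t hat)⟩, hl.2⟩

theorem inv_pow_mul_pow_le_of_recursion {ι : Type*} {N f : ι → ℕ → ℝ} {z : ℝ} {J L : ℕ}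
    (hz : 1 ≤ z) (hL : 0 < L) (hone : ∀ i n, 1 ≤ N i n)
    (hf : ∀ i, L * z ^ L ≤ ∑ j ∈ Finset.Icc 1 J, f i j / z ^ j)
    (hrec : ∀ i n (g : ℕ → ℝ), J + L ≤ n → Monotone g → (∀ i', ∀ m < n, g m ≤ N i' m) →
      ∑ j ∈ Finset.Icc 1 J, f i j * g (n - j - L) ≤ L * N i n) (n : ℕ) (i : ι) :
    (z ^ (J + L))⁻¹ * z ^ n ≤ N i n := by
  induction n using Nat.strong_induction_on generalizing i with
  | _ n ih =>
    rcases lt_or_ge n (J + L) with hn | hn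
    · refine le_trans ?_ (hone i n)
      rw [inv_mul_le_iff₀ (by positivity), mul_one]
      exact pow_le_pow_right₀ hz hn.le
    have hg : Monotone fun m => (z ^ (J + L))⁻¹ * z ^ m := fun m m' hm => by
      dsimp only
      gcongr
    refine le_of_mul_le_mul_left (le_trans ?_ (hrec i n _ hn hg fun i' m hm => ih m hm i'))
      (by exact_mod_cast hL)
    calc L * ((z ^ (J + L))⁻¹ * z ^ n)
        = (z ^ (J + L))⁻¹ * (z ^ n / z ^ L) * (L * z ^ L) := by field_simp
      _ ≤ (z ^ (J + L))⁻¹ * (z ^ n / z ^ L) * ∑ j ∈ Finset.Icc 1 J, f i j / z ^ j := by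
        gcongr
        exact hf i
      _ = ∑ j ∈ Finset.Icc 1 J, f i j * ((z ^ (J + L))⁻¹ * z ^ (n - j - L)) := by
        rw [Finset.mul_sum]
        refine Finset.sum_congr rfl fun j hj => ?_
        have hpow : z ^ n = z ^ (n - j - L) * z ^ j * z ^ L := by
          rw [← pow_add, ← pow_add]
          congr 1
          have := (Finset.mem_Icc.1 hj).2
          lia
        rw [hpow]
        field_simp

theorem pow_mul_div_pow_le {μ q : ℝ} (hμ : 0 < μ) (hq : 1 ≤ q) {f : ℕ → ℝ} (hf : ∀ j, 0 ≤ f j)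
    (J : ℕ) : (∑ j ∈ Finset.Icc 1 J, f j / μ ^ j) / q ^ J ≤
      ∑ j ∈ Finset.Icc 1 J, f j / (μ * q) ^ j := by
  rw [Finset.sum_div]
  refine Finset.sum_le_sum fun j hj => ?_
  rw [div_div, mul_pow]
  have := hf j
  gcongr
  exact (Finset.mem_Icc.1 hj).2

theorem CutsEverywhere.exists_mul_pow_le_card_saws [G.LocallyFinite] [Gbar.LocallyFinite] {μ : ℝ}
    {r : ℕ} (hcut : CutsEverywhere G) (hc : G.Connected)
    (hvt : ∀ u w : V, ∃ γ : G ≃g G, γ u = w) (hGB : G ≤ Gbar)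
    (hnew : ∀ x, ∃ u w, G.dist x u ≤ r ∧ G.dist x w ≤ r ∧ Gbar.Adj u w ∧ ¬G.Adj u w)
    (hμ : 1 ≤ μ) (hsaws : ∀ x n, μ ^ n ≤ (saws G x n).card) (v : V) :
    ∃ lam c : ℝ, μ < lam ∧ 0 < c ∧ ∀ n : ℕ, c * lam ^ n ≤ (saws Gbar v n).card := by
  have hμ₀ : 0 < μ := zero_lt_one.trans_le hμ
  obtain ⟨L, hL⟩ := exists_isConnector hcut hc hvt hnew
  choose δ w hδ using hL
  have hLpos : 0 < L := (Nat.zero_le _).trans_lt (hδ v v).length_lt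
  obtain ⟨J, hJ⟩ := exists_le_sum_card_awaySaws_div_pow hcut hc hvt hμ₀ hsaws (2 * (L * μ ^ L))
  obtain ⟨q, hq, hq2⟩ : ∃ q : ℝ, 1 < q ∧ q ^ (J + L) = 2 :=
    ⟨2 ^ ((J + L : ℕ) : ℝ)⁻¹, Real.one_lt_rpow one_lt_two (by positivity),
      Real.rpow_inv_natCast_pow zero_le_two (by positivity)⟩
  have hz : 1 ≤ μ * q := one_le_mul_of_one_le_of_one_le hμ hq.le
  refine ⟨μ * q, ((μ * q) ^ (J + L))⁻¹, lt_mul_of_one_lt_right hμ₀ hq, by positivity,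
    fun n => le_trans ?_ (Nat.cast_le.2 (card_awaySaws_le (G := G) (a := v)))⟩
  refine inv_pow_mul_pow_le_of_recursion (ι := V × V)
    (N := fun i n => ((awaySaws G Gbar i.1 i.2 n).card : ℝ))
    (f := fun i j => ((awaySaws G G i.1 i.2 j).card : ℝ)) hz hLpos
    (fun i n => by exact_mod_cast one_le_card_awaySaws hcut hc hGB i.1 i.2 n)
    (fun i => ?_) (fun i n g hn hg hgN => ?_) n (v, v)
  · refine le_trans ?_ (pow_mul_div_pow_le hμ₀ hq.le (fun _ => by positivity) J)
    rw [le_div_iff₀ (by positivity)]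
    refine le_trans (le_of_eq ?_) (hJ i.1 i.2)
    rw [← hq2]
    ring
  · have hle := sum_card_awaySaws_le_mul_card_awaySaws (y := i.1) (a := i.2) hc hGB hn
      (δ := fun P => δ (P.getLastD i.1) (P.dropLast.getLastD i.1))
      (w := fun P => w (P.getLastD i.1) (P.dropLast.getLastD i.1)) fun P => hδ _ _
    rw [← Nat.cast_le (α := ℝ), Nat.cast_sum, Nat.cast_mul] at hle
    refine le_trans (Finset.sum_le_sum fun j hj => ?_) hle
    rw [Nat.cast_sum, ← nsmul_eq_mul]
    refine Finset.card_nsmul_le_sum _ _ _ fun P _ => ?_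
    have hlt := (hδ (P.getLastD i.1) (P.dropLast.getLastD i.1)).length_lt
    have hj1 := (Finset.mem_Icc.1 hj).1
    exact (hg (by lia)).trans (hgN (_, _) _ (by lia))

end CutVertex

section Menger

variable {V : Type*} {G H : SimpleGraph V} {B : Set V} {a₁ a₂ b s s' t t' : V}

theorem exists_walk_from_last_mem (g : H.Walk s b) {X : Set V} (h : ∃ x ∈ g.support, x ∈ X) :
    ∃ y ∈ X, ∃ z : H.Walk y b, z.support ⊆ g.support ∧ ∀ t ∈ z.support, t ∈ X → t = y := by
  induction g with
  | @nil a =>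
    obtain ⟨x, hx, hX⟩ := h
    obtain rfl : x = a := by simpa using hx
    exact ⟨x, hX, SimpleGraph.Walk.nil, by simp, by simp⟩
  | cons hadj q ih =>
    by_cases hq : ∃ x ∈ q.support, x ∈ X
    · obtain ⟨y, hy, z, hzq, hzX⟩ := ih hq
      exact ⟨y, hy, z, List.subset_cons_of_subset _ hzq, hzX⟩
    · obtain ⟨x, hx, hX⟩ := h
      have hX' : ∀ t ∈ q.support, t ∉ X := fun t ht htX => hq ⟨t, ht, htX⟩
      rw [SimpleGraph.Walk.support_cons] at hx
      obtain rfl : x = _ := (List.mem_cons.1 hx).resolve_right fun hx => hX' x hx hX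
      refine ⟨x, hX, SimpleGraph.Walk.cons hadj q, List.Subset.refl _, fun t ht htX => ?_⟩
      exact (List.mem_cons.1 ht).resolve_right fun ht => hX' t ht htX

/-- Disjoint walks from `s` to the target set `B` and from `s'` to the vertex `t`. In the
augmenting-path proof of Menger's theorem for two paths, `t` moves along a walk into `B`. -/
def HalfFan (H : SimpleGraph V) (B : Set V) (s s' t : V) : Prop :=
  ∃ b ∈ B, ∃ (α : H.Walk s b) (β : H.Walk s' t), α.support.Disjoint β.support

theorem halfFan_concat {α : H.Walk s b} {β : H.Walk s' t} (hb : b ∈ B)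
    (hαβ : α.support.Disjoint β.support) (hadj : H.Adj t t') (htα : t' ∉ α.support) :
    HalfFan H B s s' t' := by
  refine ⟨b, hb, α, β.concat hadj, ?_⟩
  rw [SimpleGraph.Walk.support_concat, List.disjoint_append_right]
  exact ⟨hαβ, by simpa using htα⟩

/- The last visit of `g` to `α` or `β` tells which of the two walks is rerouted along `g`. -/
theorem halfFan_or_halfFan_of_adj {α : H.Walk s t'} {β : H.Walk s' t}
    (hα : α.IsPath) (hαβ : α.support.Disjoint β.support) (hadj : H.Adj t t') {r : V} (hb : b ∈ B)
    (hr : r = s ∨ r = s') {g : H.Walk r b} (hg : t' ∉ g.support) :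
    HalfFan H B s s' t' ∨ HalfFan H B s' s t' := by
  classical
  have hstart : r ∈ {x | x ∈ α.support ∨ x ∈ β.support} := by
    rcases hr with rfl | rfl
    · exact Or.inl α.start_mem_support
    · exact Or.inr β.start_mem_support
  obtain ⟨y, hy, z, hzg, hzy⟩ := exists_walk_from_last_mem g ⟨r, g.start_mem_support, hstart⟩
  have ht'z : t' ∉ z.support := fun h => hg (hzg h)
  rcases hy with hy | hy
  · left
    have hyt' : t' ≠ y := fun h => ht'z (h ▸ z.start_mem_support)
    refine halfFan_concat (α := (α.takeUntil y hy).append z) (β := β) hb ?_ hadj ?_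
    · intro x hx hxβ
      rcases (SimpleGraph.Walk.mem_support_append_iff _ _).1 hx with hx | hx
      · exact hαβ (α.support_takeUntil_subset_support hy hx) hxβ
      · obtain rfl := hzy x hx (Or.inr hxβ)
        exact hαβ hy hxβ
    · rw [SimpleGraph.Walk.mem_support_append_iff]
      exact not_or_intro (SimpleGraph.Walk.endpoint_notMem_support_takeUntil hα hy hyt') ht'z
  · right
    refine ⟨b, hb, (β.takeUntil y hy).append z, α, fun x hx hxα => ?_⟩
    rcases (SimpleGraph.Walk.mem_support_append_iff _ _).1 hx with hx | hx
    · exact hαβ hxα (β.support_takeUntil_subset_support hy hx)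
    · obtain rfl := hzy x hx (Or.inl hxα)
      exact hαβ hxα hy

theorem HalfFan.of_adj (h : HalfFan H B s s' t) (hadj : H.Adj t t')
    (hsep : ∃ r, (r = s ∨ r = s') ∧ ∃ b ∈ B, ReachableAvoiding H t' r b) :
    HalfFan H B s s' t' ∨ HalfFan H B s' s t' := by
  classical
  obtain ⟨b, hb, α, β, hαβ⟩ := h
  replace hαβ : α.bypass.support.Disjoint β.support :=
    List.disjoint_of_subset_left α.support_bypass_subset_support hαβ
  by_cases ht' : t' ∈ α.bypass.support
  · obtain ⟨r, hr, b', hb', g, hg⟩ := hsep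
    exact halfFan_or_halfFan_of_adj (α.bypass_isPath.takeUntil ht')
      (List.disjoint_of_subset_left (α.bypass.support_takeUntil_subset_support ht') hαβ)
      hadj hb' hr hg
  · exact Or.inl (halfFan_concat hb hαβ hadj ht')

theorem HalfFan.of_walk (h : HalfFan H B s s' t ∨ HalfFan H B s' s t) (p : H.Walk t t')
    (hsep : ∀ c, ∃ r, (r = s ∨ r = s') ∧ ∃ b ∈ B, ReachableAvoiding H c r b) :
    HalfFan H B s s' t' ∨ HalfFan H B s' s t' := by
  induction p with
  | nil => exact h
  | cons hadj _ ih =>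
    refine ih ?_
    rcases h with h | h
    · exact h.of_adj hadj (hsep _)
    · exact (h.of_adj hadj (by simpa only [or_comm] using hsep _)).symm

theorem exists_disjoint_walks
    (hsep : ∀ c, ∃ r, (r = a₁ ∨ r = a₂) ∧ ∃ b ∈ B, ReachableAvoiding H c r b) :
    ∃ b₁ ∈ B, ∃ b₂ ∈ B, ∃ (p₁ : H.Walk a₁ b₁) (p₂ : H.Walk a₂ b₂),
      p₁.support.Disjoint p₂.support := by
  obtain ⟨r, hr, b₁, hb₁, p₁, hp₁⟩ := hsep a₂
  obtain rfl : r = a₁ := hr.resolve_right (by rintro rfl; exact hp₁ p₁.start_mem_support)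
  have hstart : HalfFan H B r a₂ a₂ := ⟨b₁, hb₁, p₁, SimpleGraph.Walk.nil, by simpa using hp₁⟩
  obtain ⟨r', hr', b, hb, p, hp⟩ := hsep r
  obtain rfl : r' = a₂ := hr'.resolve_left (by rintro rfl; exact hp p.start_mem_support)
  rcases HalfFan.of_walk (Or.inl hstart) p hsep with ⟨b', hb', α, β, h⟩ | ⟨b', hb', α, β, h⟩
  · exact ⟨b', hb', b, hb, α, β, h⟩
  · exact ⟨b, hb, b', hb', β, α, h.symm⟩

theorem exists_disjoint_paths_of_subset {U : Set V} (ha₁ : a₁ ∈ U) (ha₂ : a₂ ∈ U)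
    (hsep : ∀ c, ∃ r, (r = a₁ ∨ r = a₂) ∧ ∃ b ∈ B, ∃ p : G.Walk r b,
      c ∉ p.support ∧ ∀ t ∈ p.support, t ∈ U) :
    ∃ b₁ ∈ B, ∃ b₂ ∈ B, ∃ (p₁ : G.Walk a₁ b₁) (p₂ : G.Walk a₂ b₂), p₁.IsPath ∧ p₂.IsPath ∧
      p₁.support.Disjoint p₂.support ∧ (∀ t ∈ p₁.support, t ∈ U) ∧ ∀ t ∈ p₂.support, t ∈ U := by
  classical
  have hsep' : ∀ c : U, ∃ r, (r = ⟨a₁, ha₁⟩ ∨ r = ⟨a₂, ha₂⟩) ∧ ∃ b ∈ {b : U | (b : V) ∈ B},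
      ReachableAvoiding (G.induce U) c r b := by
    intro c
    obtain ⟨r, hr, b, hb, p, hcp, hpU⟩ := hsep c
    refine ⟨⟨r, hpU r p.start_mem_support⟩, by simpa only [Subtype.mk.injEq] using hr,
      ⟨b, hpU b p.end_mem_support⟩, hb, p.induce U hpU, ?_⟩
    rw [SimpleGraph.Walk.support_induce]
    exact fun hc => hcp ((List.mem_attachWith _ c).1 hc)
  obtain ⟨b₁, hb₁, b₂, hb₂, p₁, p₂, hdisj⟩ := exists_disjoint_walks hsep'
  let ι : G.induce U →g G := (SimpleGraph.Embedding.induce U).toHom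
  have hι : Function.Injective ι := Subtype.val_injective
  have hU {a b : U} {p : (G.induce U).Walk a b} : ∀ t ∈ (p.map ι).support, t ∈ U := by
    intro t ht
    rw [SimpleGraph.Walk.support_map, List.mem_map] at ht
    obtain ⟨t, -, rfl⟩ := ht
    exact t.2
  have hdisj' : (p₁.bypass.map ι).support.Disjoint (p₂.bypass.map ι).support := by
    rw [SimpleGraph.Walk.support_map, SimpleGraph.Walk.support_map]
    exact List.disjoint_map hι fun t h₁ h₂ => hdisj (p₁.support_bypass_subset_support h₁)
      (p₂.support_bypass_subset_support h₂)
  exact ⟨b₁, hb₁, b₂, hb₂, p₁.bypass.map ι, p₂.bypass.map ι, p₁.bypass_isPath.map hι,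
    p₂.bypass_isPath.map hι, hdisj', hU, hU⟩

end Menger

section Surgery

variable {V : Type*} {G Gbar : SimpleGraph V} {c u w x y : V} {l : List V}

theorem exists_adj_mem_of_isChain (h : (y :: l).IsChain G.Adj) (hl : l ≠ []) (hx : x ∈ y :: l) :
    ∃ z ∈ y :: l, G.Adj x z := by
  induction l generalizing y with
  | nil => exact absurd rfl hl
  | cons a l ih =>
    obtain ⟨hya, h⟩ := List.isChain_cons_cons.1 h
    rcases List.mem_cons.1 hx with rfl | hx
    · exact ⟨a, by simp, hya⟩
    · rcases List.mem_cons.1 hx with rfl | hx'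
      · exact ⟨y, by simp, hya.symm⟩
      · obtain ⟨z, hz, hxz⟩ := ih h (List.ne_nil_of_mem hx') hx
        exact ⟨z, List.mem_cons_of_mem _ hz, hxz⟩

theorem IsSaw.exists_walk_to_end_avoiding (h : IsSaw G y l) (hx : x ∈ y :: l) (hxc : x ≠ c) :
    ∃ b, (b = y ∨ b = l.getLastD y) ∧ ∃ q : G.Walk x b,
      c ∉ q.support ∧ ∀ t ∈ q.support, t ∈ y :: l := by
  classical
  obtain ⟨p, hp⟩ := exists_walk_of_isChain h.1
  have hpath : p.IsPath := p.isPath_def.2 (hp ▸ h.2)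
  rw [← hp] at hx
  by_cases hc : c ∈ (p.dropUntil x hx).support
  · refine ⟨y, Or.inl rfl, (p.takeUntil x hx).reverse, ?_, fun t ht => ?_⟩
    · rw [SimpleGraph.Walk.support_reverse, List.mem_reverse]
      intro hc'
      rw [← p.take_spec hx] at hpath
      exact hpath.ne_of_mem_support_of_append hxc.symm hc' hc rfl
    · rw [SimpleGraph.Walk.support_reverse, List.mem_reverse] at ht
      exact hp ▸ p.support_takeUntil_subset_support hx ht
  · exact ⟨_, Or.inr rfl, p.dropUntil x hx, hc,
      fun t ht => hp ▸ p.support_dropUntil_subset_support hx ht⟩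

/-- Any two vertices at distance at most `r` from a vertex `x` can be joined while avoiding any
third vertex, without leaving the ball of radius `R` about `x`. -/
def LocallyBiconnected (G : SimpleGraph V) (r R : ℕ) : Prop :=
  ∀ x c a b, G.dist x a ≤ r → G.dist x b ≤ r → a ≠ c → b ≠ c →
    ∃ p : G.Walk a b, c ∉ p.support ∧ ∀ t ∈ p.support, G.dist x t ≤ R

theorem dist_le_length_of_mem_support {a b t : V} (p : G.Walk a b) (ht : t ∈ p.support) :
    G.dist a t ≤ p.length := by
  classical
  exact (SimpleGraph.dist_le _).trans (p.length_takeUntil_le_length ht)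

theorem exists_locallyBiconnected [G.LocallyFinite] (hc : G.Connected)
    (hvt : ∀ u w : V, ∃ γ : G ≃g G, γ u = w) (hcut : ¬HasCutVertex G) (r : ℕ) :
    ∃ R, r ≤ R ∧ LocallyBiconnected G r R := by
  obtain ⟨L, hL⟩ := exists_bound_length_isSaw_avoiding hc hvt (r + r)
  refine ⟨r + max L (r + r), Nat.le_add_right _ _, fun x c a b ha hb hac hbc => ?_⟩
  suffices ∃ p : G.Walk a b, c ∉ p.support ∧ p.length ≤ max L (r + r) by
    obtain ⟨p, hcp, hp⟩ := this
    exact ⟨p, hcp, fun t ht => hc.dist_triangle.trans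
      (add_le_add ha ((dist_le_length_of_mem_support p ht).trans hp))⟩
  have hab : G.dist a b ≤ r + r :=
    hc.dist_triangle.trans (add_le_add (SimpleGraph.dist_comm.trans_le ha) hb)
  by_cases hdc : G.dist a c ≤ r + r
  · have hconn : ReachableAvoiding G c a b := by
      by_contra h
      exact hcut ⟨c, a, b, hac, hbc, h⟩
    obtain ⟨l, hl, rfl, hcl, hlL⟩ := hL a b c hab hdc hconn
    obtain ⟨p, hp⟩ := exists_walk_of_isChain hl.1
    have hlen : p.length = l.length := by simpa using congrArg List.length hp
    exact ⟨p, hp ▸ hcl, hlen.trans_le (hlL.trans (le_max_left _ _))⟩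
  · obtain ⟨p, hp⟩ := hc.exists_walk_length_eq_dist a b
    have hpr : p.length ≤ r + r := hp.trans_le hab
    exact ⟨p, fun h => hdc ((dist_le_length_of_mem_support p h).trans hpr),
      hpr.trans (le_max_right _ _)⟩

theorem exists_isSaw_through_edge (hGB : G ≤ Gbar) {e : V} {p : G.Walk u y} {q : G.Walk w e}
    (hp : p.IsPath) (hq : q.IsPath) (hpq : p.support.Disjoint q.support) (hadj : Gbar.Adj u w)
    (hnadj : ¬G.Adj u w) :
    ∃ T, IsSaw Gbar y T ∧ T.getLastD y = e ∧ (∀ t ∈ y :: T, t ∈ p.support ∨ t ∈ q.support) ∧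
      ¬(y :: T).IsChain G.Adj := by
  have hA := isSaw_tail_support hp.reverse
  have hC := isSaw_tail_support hq
  have hAu := getLastD_tail_support p.reverse
  have hCe := getLastD_tail_support q
  have hAp : y :: p.reverse.support.tail = p.support.reverse := by
    rw [SimpleGraph.Walk.cons_tail_support, SimpleGraph.Walk.support_reverse]
  have hCq := SimpleGraph.Walk.cons_tail_support q
  generalize p.reverse.support.tail = A at hA hAu hAp
  generalize q.support.tail = C at hC hCe hCq
  refine ⟨A ++ w :: C, isSaw_append.2 ⟨hA.mono hGB, ?_, fun t ht ht' => ?_⟩, ?_,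
    fun t ht => ?_, fun h => ?_⟩
  · rw [hAu]
    exact isSaw_cons.2 ⟨hadj, hC.mono hGB, hCq ▸ hpq p.start_mem_support⟩
  · rw [hAp, List.mem_reverse] at ht
    exact hpq ht (hCq ▸ ht')
  · rw [getLastD_append, List.getLastD_cons, hCe]
  · rw [← List.cons_append, hAp, hCq, List.mem_append, List.mem_reverse] at ht
    exact ht
  · rw [isChain_cons_append, hAu, List.isChain_cons_cons] at h
    exact hnadj h.2.1

variable {r R : ℕ}

theorem LocallyBiconnected.exists_walk_to_end_avoiding (hloc : LocallyBiconnected G r R)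
    (hr : 1 ≤ r) (hl : IsSaw G y l) (hne : l ≠ []) (hx : x ∈ y :: l) (hu : G.dist x u ≤ r)
    (huc : u ≠ c) :
    ∃ b, (b = y ∨ b = l.getLastD y) ∧ ∃ p : G.Walk u b,
      c ∉ p.support ∧ ∀ t ∈ p.support, t ∈ y :: l ∨ G.dist x t ≤ R := by
  obtain ⟨z, hz, hxz, hzc⟩ : ∃ z ∈ y :: l, G.dist x z ≤ 1 ∧ z ≠ c := by
    by_cases hxc : x = c
    · obtain ⟨z, hz, hadj⟩ := exists_adj_mem_of_isChain hl.1 hne hx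
      exact ⟨z, hz, (SimpleGraph.dist_eq_one_iff_adj.2 hadj).le, hxc ▸ hadj.ne'⟩
    · exact ⟨x, hx, by simp, hxc⟩
  obtain ⟨p, hcp, hp⟩ := hloc x c u z hu (hxz.trans hr) huc hzc
  obtain ⟨b, hb, q, hcq, hq⟩ := hl.exists_walk_to_end_avoiding hz hzc
  refine ⟨b, hb, p.append q, ?_, fun t ht => ?_⟩
  · rw [SimpleGraph.Walk.mem_support_append_iff]
    exact not_or_intro hcp hcq
  · exact ((SimpleGraph.Walk.mem_support_append_iff _ _).1 ht).symm.imp (hq t) (hp t)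

theorem LocallyBiconnected.exists_surgery (hloc : LocallyBiconnected G r R) (hr : 1 ≤ r)
    (hrR : r ≤ R) (hGB : G ≤ Gbar) (hl : IsSaw G y l) (hne : l ≠ []) (hx : x ∈ y :: l)
    (hu : G.dist x u ≤ r) (hw : G.dist x w ≤ r) (hadj : Gbar.Adj u w) (hnadj : ¬G.Adj u w) :
    ∃ T, IsSaw Gbar y T ∧ T.getLastD y = l.getLastD y ∧
      (∀ t ∈ y :: T, t ∈ y :: l ∨ G.dist x t ≤ R) ∧ ¬(y :: T).IsChain G.Adj := by
  let U : Set V := {t | t ∈ y :: l ∨ G.dist x t ≤ R}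
  have hsep : ∀ c, ∃ s, (s = u ∨ s = w) ∧ ∃ b ∈ ({y, l.getLastD y} : Set V),
      ∃ p : G.Walk s b, c ∉ p.support ∧ ∀ t ∈ p.support, t ∈ U := by
    intro c
    by_cases huc : u = c
    · exact ⟨w, Or.inr rfl, hloc.exists_walk_to_end_avoiding hr hl hne hx hw (huc ▸ hadj.ne')⟩
    · exact ⟨u, Or.inl rfl, hloc.exists_walk_to_end_avoiding hr hl hne hx hu huc⟩
  obtain ⟨b₁, hb₁, b₂, hb₂, p, q, hp, hq, hpq, hpU, hqU⟩ :=
    exists_disjoint_paths_of_subset (U := U) (Or.inr (hu.trans hrR)) (Or.inr (hw.trans hrR)) hsep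
  have hne : b₁ ≠ b₂ := fun h => hpq p.end_mem_support (h ▸ q.end_mem_support)
  have hU : ∀ t, t ∈ p.support ∨ t ∈ q.support → t ∈ U :=
    fun t ht => ht.elim (hpU t) (hqU t)
  rcases hb₁ with rfl | rfl <;> rcases hb₂ with rfl | rfl
  · exact absurd rfl hne
  · obtain ⟨T, hT, hlast, hTU, hchain⟩ := exists_isSaw_through_edge hGB hp hq hpq hadj hnadj
    exact ⟨T, hT, hlast, fun t ht => hU t (hTU t ht), hchain⟩
  · obtain ⟨T, hT, hlast, hTU, hchain⟩ := exists_isSaw_through_edge hGB hq hp hpq.symm hadj.symm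
      fun h => hnadj h.symm
    exact ⟨T, hT, hlast, fun t ht => hU t (hTU t ht).symm, hchain⟩
  · exact absurd rfl hne

end Surgery

section Tails

variable {α : Type*} {X : Finset (List α)} {c d : List α}

open Classical in
/-- The continuations `d` of the list `c` to a list `c ++ d` of `X`. -/
noncomputable def tails (X : Finset (List α)) (c : List α) : Finset (List α) :=
  (X.filter (c <+: ·)).image (List.drop c.length)

theorem mem_tails : d ∈ tails X c ↔ c ++ d ∈ X := by
  classical
  simp only [tails, Finset.mem_image, Finset.mem_filter]
  constructor
  · rintro ⟨_, ⟨hl, e, rfl⟩, rfl⟩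
    rwa [List.drop_left]
  · exact fun h => ⟨c ++ d, ⟨h, List.prefix_append c d⟩, List.drop_left⟩

theorem card_tails_le : (tails X c).card ≤ X.card :=
  Finset.card_le_card_of_injOn (c ++ ·) (fun _ hd => mem_tails.1 hd)
    fun _ _ _ _ h => List.append_cancel_left h

open Classical in
theorem sum_tails {β : Type*} [AddCommMonoid β] {C : Finset (List α)} {m : ℕ}
    (hC : ∀ c ∈ C, c.length = m) (f : List α → β) :
    ∑ c ∈ C, ∑ d ∈ tails X c, f (c ++ d) = ∑ l ∈ X with l.take m ∈ C, f l := by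
  rw [Finset.sum_sigma']
  refine Finset.sum_bij' (fun p _ => p.1 ++ p.2) (fun l _ => ⟨l.take m, l.drop m⟩) ?_ ?_ ?_ ?_ ?_
  · rintro ⟨c, d⟩ h
    obtain ⟨hc, hd⟩ := Finset.mem_sigma.1 h
    exact Finset.mem_filter.2 ⟨mem_tails.1 hd, by rwa [List.take_left' (hC c hc)]⟩
  · intro l h
    obtain ⟨hl, hc⟩ := Finset.mem_filter.1 h
    exact Finset.mem_sigma.2 ⟨hc, mem_tails.2 (by rwa [List.take_append_drop])⟩
  · rintro ⟨c, d⟩ h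
    have hc := hC c (Finset.mem_sigma.1 h).1
    simp [List.take_left' hc, List.drop_left' hc]
  · exact fun l _ => List.take_append_drop m l
  · exact fun _ _ => rfl

theorem sum_card_tails_le {C : Finset (List α)} {m : ℕ} (hC : ∀ c ∈ C, c.length = m) :
    ∑ c ∈ C, (tails X c).card ≤ X.card := by
  classical
  have h := sum_tails (X := X) hC fun _ => 1
  simp only [Finset.sum_const, smul_eq_mul, mul_one] at h
  exact h.trans_le (Finset.card_le_card (Finset.filter_subset _ _))

variable {G : SimpleGraph α} [G.LocallyFinite] {y : α} {m n : ℕ}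

theorem tails_subset_saws (hX : X ⊆ saws G y (m + n)) (hc : c.length = m) :
    tails X c ⊆ saws G (c.getLastD y) n := by
  intro d hd
  obtain ⟨h, hlen⟩ := mem_saws.1 (hX (mem_tails.1 hd))
  rw [List.length_append, hc] at hlen
  exact mem_saws.2 ⟨(isSaw_append.1 h).2.1, Nat.add_left_cancel hlen⟩

theorem sum_eq_sum_tails {β : Type*} [AddCommMonoid β] (hX : X ⊆ saws G y (m + n))
    (f : List α → β) :
    ∑ l ∈ X, f l = ∑ c ∈ saws G y m, ∑ d ∈ tails X c, f (c ++ d) := by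
  classical
  rw [sum_tails (fun c hc => (mem_saws.1 hc).2), Finset.filter_true_of_mem]
  intro l hl
  obtain ⟨h, hlen⟩ := mem_saws.1 (hX hl)
  exact mem_saws.2 ⟨h.take m, by simp [hlen]⟩

end Tails

section Chunks

variable {V : Type*} {G : SimpleGraph V} [G.LocallyFinite] {m N : ℕ} {P : V → List V → Prop}

open Classical in
/-- Cut a walk `l` from `y` into chunks of `m` steps. This is the number of those of the first `N`
chunks which satisfy `P`, where `P` is given the vertex at which the chunk starts. -/
noncomputable def goodCount (m : ℕ) (P : V → List V → Prop) : ℕ → V → List V → ℕ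
  | 0, _, _ => 0
  | N + 1, y, l =>
    (if P y (l.take m) then 1 else 0) + goodCount m P N ((l.take m).getLastD y) (l.drop m)

open Classical in
theorem goodCount_append {y : V} {c d : List V} (hc : c.length = m) :
    goodCount m P (N + 1) y (c ++ d) =
      (if P y c then 1 else 0) + goodCount m P N (c.getLastD y) d := by
  rw [goodCount, List.take_left' hc, List.drop_left' hc]

variable {a s t q : ℝ}

open Classical in
theorem sum_pow_ite_le (y : V) (ht : 0 ≤ t) (hs : ((saws G y m).card : ℝ) ≤ s)
    (ha : (((saws G y m).filter fun c => ¬P y c).card : ℝ) ≤ a) :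
    ∑ c ∈ saws G y m, t ^ (if P y c then 1 else 0) ≤ a + t * s := by
  calc
    _ ≤ ∑ c ∈ saws G y m, ((if ¬P y c then 1 else 0) + t) := by
      refine Finset.sum_le_sum fun c _ => ?_
      by_cases h : P y c <;> simp [h, ht]
    _ = ((saws G y m).filter fun c => ¬P y c).card + t * (saws G y m).card := by
      rw [Finset.sum_add_distrib, Finset.sum_boole, Finset.sum_const, nsmul_eq_mul, mul_comm t]
    _ ≤ a + t * s := by gcongr

open Classical in
theorem sum_pow_goodCount_le (ht : 0 ≤ t) (hs : ∀ y, ((saws G y m).card : ℝ) ≤ s)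
    (ha : ∀ y, (((saws G y m).filter fun c => ¬P y c).card : ℝ) ≤ a) (hq : a + t * s ≤ q)
    (N : ℕ) (y : V) : ∑ l ∈ saws G y (N * m), t ^ goodCount m P N y l ≤ q ^ N := by
  have hchunk (y : V) : ∑ c ∈ saws G y m, t ^ (if P y c then 1 else 0) ≤ q :=
    (sum_pow_ite_le y ht (hs y) (ha y)).trans hq
  have hq₀ : 0 ≤ q := (Finset.sum_nonneg fun _ _ => by positivity).trans (hchunk y)
  induction N generalizing y with
  | zero => simp [saws_zero, goodCount]
  | succ N ih =>
    rw [add_mul, one_mul, add_comm, sum_eq_sum_tails subset_rfl]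
    calc
      _ ≤ ∑ c ∈ saws G y m, t ^ (if P y c then 1 else 0) * q ^ N := by
        refine Finset.sum_le_sum fun c hc => ?_
        have hlen := (mem_saws.1 hc).2
        simp only [goodCount_append hlen, pow_add, ← Finset.mul_sum]
        gcongr
        exact (Finset.sum_le_sum_of_subset_of_nonneg (tails_subset_saws subset_rfl hlen)
          fun _ _ _ => by positivity).trans (ih _)
      _ ≤ q * q ^ N := by
        rw [← Finset.sum_mul]
        gcongr
        exact hchunk y
      _ = q ^ (N + 1) := (pow_succ' q N).symm

open Classical in
theorem card_filter_goodCount_lt_mul_pow_le (ht : 0 < t) (ht₁ : t ≤ 1)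
    (hs : ∀ y, ((saws G y m).card : ℝ) ≤ s)
    (ha : ∀ y, (((saws G y m).filter fun c => ¬P y c).card : ℝ) ≤ a) (hq : a + t * s ≤ q)
    (N M : ℕ) (y : V) :
    (((saws G y (N * m)).filter fun l => goodCount m P N y l < M).card : ℝ) * t ^ M ≤ q ^ N := by
  rw [← nsmul_eq_mul]
  calc
    _ ≤ ∑ l ∈ saws G y (N * m) with goodCount m P N y l < M, t ^ goodCount m P N y l :=
      Finset.card_nsmul_le_sum _ _ _ fun l hl =>
        pow_le_pow_of_le_one ht.le ht₁ (Finset.mem_filter.1 hl).2.le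
    _ ≤ ∑ l ∈ saws G y (N * m), t ^ goodCount m P N y l :=
      Finset.sum_le_sum_of_subset_of_nonneg (Finset.filter_subset _ _)
        fun _ _ _ => by positivity
    _ ≤ q ^ N := sum_pow_goodCount_le ht.le hs ha hq N y

end Chunks

/-- `Splice m P T r y l l'` means that the walk `l'` from `y` arises from `l`, cut into chunks of
`m` steps, by replacing `r` chunks `c` which satisfy `P` by `T z c`, where `z` is the vertex at
which `c` starts. -/
inductive Splice {V : Type*} (m : ℕ) (P : V → List V → Prop) (T : V → List V → List V) :
    ℕ → V → List V → List V → Prop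
  | nil (y : V) : Splice m P T 0 y [] []
  | keep {r : ℕ} {y : V} {c l l' : List V} (hc : c.length = m)
      (h : Splice m P T r (c.getLastD y) l l') : Splice m P T r y (c ++ l) (c ++ l')
  | replace {r : ℕ} {y : V} {c l l' : List V} (hc : c.length = m) (hP : P y c)
      (h : Splice m P T r (c.getLastD y) l l') : Splice m P T (r + 1) y (c ++ l) (T y c ++ l')

section Splice

variable {V : Type*} {m r : ℕ} {P : V → List V → Prop} {T : V → List V → List V} {y : V}
  {l l' : List V}

theorem Splice.length_le (h : Splice m P T r y l l') : l.length ≤ l'.length + r * m := by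
  induction h with
  | nil => simp
  | keep _ _ ih =>
    simp only [List.length_append]
    omega
  | replace hc _ _ ih =>
    simp only [List.length_append, add_one_mul]
    omega

theorem Splice.length_le_add_mul {b : ℕ} (hT : ∀ y c, P y c → (T y c).length ≤ c.length + b)
    (h : Splice m P T r y l l') : l'.length ≤ l.length + r * b := by
  induction h with
  | nil => simp
  | keep _ _ ih =>
    simp only [List.length_append]
    omega
  | @replace _ y c _ _ _ hP _ ih =>
    have := hT y c hP
    simp only [List.length_append, add_one_mul]
    omega

variable {G : SimpleGraph V} [G.LocallyFinite] {N s : ℕ}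

theorem sum_tails_keep_le (hsum : ∀ (z : V) (Y O : Finset (List V)), Y ⊆ saws G z (N * m) →
      (∀ l ∈ Y, ∀ l', Splice m P T r z l l' → l' ∈ O) →
      ∑ l ∈ Y, (goodCount m P N z l).choose r ≤ s ^ r * O.card)
    {X O : Finset (List V)} (hX : X ⊆ saws G y (m + N * m))
    (hO : ∀ l ∈ X, ∀ l', Splice m P T r y l l' → (y :: l'.take m).IsChain G.Adj → l' ∈ O) :
    ∑ c ∈ saws G y m, ∑ d ∈ tails X c, (goodCount m P N (c.getLastD y) d).choose r ≤
      s ^ r * O.card := by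
  calc
    _ ≤ ∑ c ∈ saws G y m, s ^ r * (tails O c).card := by
      refine Finset.sum_le_sum fun c hc => ?_
      obtain ⟨hsaw, hlen⟩ := mem_saws.1 hc
      refine hsum _ _ _ (tails_subset_saws hX hlen) fun d hd l' hl' => mem_tails.2 ?_
      exact hO _ (mem_tails.1 hd) _ (hl'.keep hlen) (by rw [List.take_left' hlen]; exact hsaw.1)
    _ ≤ s ^ r * O.card := by
      rw [← Finset.mul_sum]
      exact Nat.mul_le_mul_left _ (sum_card_tails_le fun c hc => (mem_saws.1 hc).2)

open Classical in
theorem sum_tails_replace_le (hsum : ∀ (z : V) (Y O : Finset (List V)), Y ⊆ saws G z (N * m) →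
      (∀ l ∈ Y, ∀ l', Splice m P T r z l l' → l' ∈ O) →
      ∑ l ∈ Y, (goodCount m P N z l).choose r ≤ s ^ r * O.card)
    (hs : (saws G y m).card ≤ s)
    (hT : ∀ c, P y c → ¬(y :: (T y c).take m).IsChain G.Adj)
    {X O : Finset (List V)} (hX : X ⊆ saws G y (m + N * m))
    (hO : ∀ l ∈ X, ∀ l', Splice m P T (r + 1) y l l' → ¬(y :: l'.take m).IsChain G.Adj →
      l' ∈ O) :
    ∑ c ∈ saws G y m with P y c, ∑ d ∈ tails X c, (goodCount m P N (c.getLastD y) d).choose r ≤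
      s ^ (r + 1) * O.card := by
  calc
    _ ≤ ∑ c ∈ saws G y m with P y c, s ^ r * O.card := by
      refine Finset.sum_le_sum fun c hc => ?_
      obtain ⟨hc, hP⟩ := Finset.mem_filter.1 hc
      have hlen := (mem_saws.1 hc).2
      refine (hsum _ _ (tails O (T y c)) (tails_subset_saws hX hlen) fun d hd l' hl' =>
        mem_tails.2 ?_).trans (Nat.mul_le_mul_left _ card_tails_le)
      refine hO _ (mem_tails.1 hd) _ (hl'.replace hlen hP) fun h => hT c hP ?_
      rw [List.take_append, isChain_cons_append] at h
      exact h.1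
    _ ≤ s ^ (r + 1) * O.card := by
      rw [Finset.sum_const, smul_eq_mul, pow_succ', mul_assoc]
      exact Nat.mul_le_mul_right _ ((Finset.card_le_card (Finset.filter_subset _ _)).trans hs)

/- The result of a splicing shows, by whether it starts with a walk of `G`, whether its first chunk
was replaced. So only the contents of the `r` replaced chunks are lost. -/
theorem sum_choose_goodCount_le (hs : ∀ y, (saws G y m).card ≤ s)
    (hT : ∀ y c, P y c → ¬(y :: (T y c).take m).IsChain G.Adj) (N r : ℕ) (y : V)
    (X O : Finset (List V)) (hX : X ⊆ saws G y (N * m))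
    (hO : ∀ l ∈ X, ∀ l', Splice m P T r y l l' → l' ∈ O) :
    ∑ l ∈ X, (goodCount m P N y l).choose r ≤ s ^ r * O.card := by
  classical
  induction N generalizing r y X O with
  | zero =>
    rw [zero_mul, saws_zero] at hX
    cases r with
    | zero =>
      simp only [Nat.choose_zero_right, Finset.sum_const, smul_eq_mul, mul_one, pow_zero, one_mul]
      refine Finset.card_le_card fun l hl => ?_
      obtain rfl := Finset.mem_singleton.1 (hX hl)
      exact hO _ hl _ (.nil y)
    | succ r => simp [goodCount]
  | succ N ih =>
    rw [add_mul, one_mul, add_comm] at hX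
    rw [sum_eq_sum_tails hX, ← Finset.card_filter_add_card_filter_not
      (s := O) fun l' => (y :: l'.take m).IsChain G.Adj, mul_add]
    have hkeep := sum_tails_keep_le (ih r) hX fun l hl l' hl' hch =>
      Finset.mem_filter.2 ⟨hO l hl l' hl', hch⟩
    cases r with
    | zero =>
      simp only [Nat.choose_zero_right] at hkeep ⊢
      exact hkeep.trans (Nat.le_add_right _ _)
    | succ r =>
      have hreplace := sum_tails_replace_le (ih r) (hs y) (hT y) hX fun l hl l' hl' hch =>
        Finset.mem_filter.2 ⟨hO l hl l' hl', hch⟩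
      refine le_trans (le_of_eq ?_) (add_le_add hkeep hreplace)
      rw [Finset.sum_filter, ← Finset.sum_add_distrib]
      refine Finset.sum_congr rfl fun c hc => ?_
      simp only [goodCount_append (mem_saws.1 hc).2]
      split_ifs
      · simp only [add_comm 1, Nat.choose_succ_succ, Finset.sum_add_distrib]
        exact add_comm _ _
      · simp

end Splice

section Sparse

variable {V : Type*} {G : SimpleGraph V} {r k : ℕ} {F F' : List V} {x t : V}

open Classical in
/-- The number of vertices of `F` within distance `r` of `x`. -/
noncomputable def localCount (G : SimpleGraph V) (r : ℕ) (F : List V) (x : V) : ℕ :=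
  {t ∈ F.toFinset | G.dist x t ≤ r}.card

/-- Every ball of radius `r` about a vertex of `F` contains fewer than `k` vertices of `F`. In the
proof of Kesten's pattern theorem this is the failure of the event `E(k)` along the walk `F`. -/
def Sparse (G : SimpleGraph V) (r k : ℕ) (F : List V) : Prop :=
  ∀ x ∈ F, localCount G r F x < k

theorem Sparse.mem_of_dist_le (hF : Sparse G r (k + 1) F) (hF' : F' ⊆ F) (hx : x ∈ F')
    (hk : k ≤ localCount G r F' x) (ht : t ∈ F) (hxt : G.dist x t ≤ r) : t ∈ F' := by
  classical
  have hsub : {t ∈ F'.toFinset | G.dist x t ≤ r} ⊆ {t ∈ F.toFinset | G.dist x t ≤ r} :=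
    Finset.filter_subset_filter _ fun t ht => List.mem_toFinset.2 (hF' (List.mem_toFinset.1 ht))
  have heq := Finset.eq_of_subset_of_card_le hsub ((Nat.le_of_lt_succ (hF x (hF' hx))).trans hk)
  have htF : t ∈ {t ∈ F.toFinset | G.dist x t ≤ r} :=
    Finset.mem_filter.2 ⟨List.mem_toFinset.2 ht, hxt⟩
  rw [← heq, Finset.mem_filter, List.mem_toFinset] at htF
  exact htF.1

theorem localCount_map (γ : G ≃g G) (r : ℕ) (F : List V) (x : V) :
    localCount G r (F.map γ) (γ x) = localCount G r F x := by
  classical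
  unfold localCount
  rw [← Finset.card_image_of_injective (F.toFinset.filter (G.dist x · ≤ r)) γ.injective]
  congr 1
  ext t
  simp only [Finset.mem_filter, List.mem_toFinset, List.mem_map, Finset.mem_image]
  constructor
  · rintro ⟨⟨z, hz, rfl⟩, h⟩
    exact ⟨z, ⟨hz, by rwa [dist_map_iso] at h⟩, rfl⟩
  · rintro ⟨z, ⟨hz, h⟩, rfl⟩
    exact ⟨⟨z, hz, rfl⟩, by rwa [dist_map_iso]⟩

theorem sparse_map_iff (γ : G ≃g G) : Sparse G r k (F.map γ) ↔ Sparse G r k F := by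
  simp only [Sparse, List.forall_mem_map, localCount_map]

theorem not_sparse_one (hne : F ≠ []) : ¬Sparse G r 1 F := by
  intro h
  obtain ⟨x, hx⟩ := List.exists_mem_of_ne_nil F hne
  refine (Finset.card_pos.2 ⟨x, ?_⟩).ne' (Nat.lt_one_iff.1 (h x hx))
  simp [hx]

variable [G.LocallyFinite]

theorem sparse_of_ncard_lt (hc : G.Connected) (hk : ∀ x, {t | G.dist x t ≤ r}.ncard < k) :
    Sparse G r k F := by
  intro x _
  refine lt_of_le_of_lt ?_ (hk x)
  rw [localCount, ← Set.ncard_coe_finset]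
  exact Set.ncard_le_ncard (fun t ht => (Finset.mem_filter.1 (Finset.mem_coe.1 ht)).2)
    (finite_setOf_dist_le hc x r)

end Sparse

/-- The walk `l'` of `Gbar` may replace the piece `l`, starting at `y`, of a walk of `G` with
vertices in `F`. Its new vertices avoid `F` and lie in the ball of radius `R` about a vertex `x`.
The walk `F` visits the ball of radius `2 * R` about `x` only before the endpoint of `l`, which
keeps the replacements of different pieces disjoint. -/
def IsReplacement {V : Type*} (G Gbar : SimpleGraph V) (R : ℕ) (F : List V) (y : V)
    (l l' : List V) : Prop :=
  IsSaw Gbar y l' ∧ l'.getLastD y = l.getLastD y ∧ ∃ x ∈ y :: l,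
    (∀ t ∈ F, G.dist x t ≤ 2 * R → t ∈ y :: l ∧ t ≠ l.getLastD y) ∧
    ∀ t ∈ l', t ∈ l ∨ t ∉ F ∧ G.dist x t ≤ R

section Replacement

variable {V : Type*} {G Gbar : SimpleGraph V} {R k L : ℕ} {F : List V} {x y : V} {l l' : List V}

theorem Sparse.isReplacement_append_drop (hF : Sparse G (2 * R) (k + 1) F) (hGB : G ≤ Gbar)
    (hl : IsSaw G y l) (hL : L < l.length) (hlF : y :: l ⊆ F) (hx : x ∈ y :: l.take L)
    (hk : k ≤ localCount G (2 * R) (y :: l.take L) x) (hl' : IsSaw Gbar y l')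
    (hlast : l'.getLastD y = (l.take L).getLastD y)
    (hmem : ∀ t ∈ y :: l', t ∈ y :: l.take L ∨ G.dist x t ≤ R) :
    IsReplacement G Gbar R F y l (l' ++ l.drop L) := by
  have hsub : y :: l.take L ⊆ y :: l := List.cons_subset_cons _ (List.take_subset _ _)
  have hnear : ∀ t ∈ F, G.dist x t ≤ 2 * R → t ∈ y :: l.take L :=
    fun t ht => hF.mem_of_dist_le (List.Subset.trans hsub hlF) hx hk ht
  have hl'F : ∀ t ∈ y :: l', t ∈ F → t ∈ y :: l.take L :=
    fun t ht htF => (hmem t ht).elim id fun h => hnear t htF (by omega)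
  have hlast' : l.getLastD y = (l.drop L).getLastD ((l.take L).getLastD y) := by
    rw [← getLastD_append, List.take_append_drop]
  obtain ⟨-, hdrop, hdisj⟩ := isSaw_append.1 ((List.take_append_drop L l).symm ▸ hl)
  refine ⟨isSaw_append.2 ⟨hl', hlast ▸ hdrop.mono hGB, fun t ht ht' => ?_⟩, ?_, x, hsub hx,
    fun t htF hxt => ⟨hsub (hnear t htF hxt), ?_⟩, fun t ht => ?_⟩
  · have htF := hlF (List.mem_cons_of_mem _ (List.mem_of_mem_drop ht'))
    exact hdisj t (hl'F t ht htF) ht'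
  · rw [getLastD_append, hlast, hlast']
  · rintro rfl
    refine hdisj _ (hnear _ htF hxt) ?_
    rw [hlast']
    exact getLastD_mem_of_ne_nil _ (by simpa using hL)
  · rcases List.mem_append.1 ht with ht | ht
    · have hty : t ≠ y := fun h => (List.nodup_cons.1 hl'.2).1 (h ▸ ht)
      by_cases htF : t ∈ F
      · have := hsub (hl'F t (List.mem_cons_of_mem _ ht) htF)
        exact Or.inl (List.mem_of_ne_of_mem hty this)
      · refine Or.inr ⟨htF, (hmem t (List.mem_cons_of_mem _ ht)).resolve_left fun h => ?_⟩
        exact htF (hlF (hsub h))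
    · exact Or.inl (List.mem_of_mem_drop ht)

theorem IsReplacement.isSaw_append (hc : G.Connected) (hl : IsReplacement G Gbar R F y l l')
    {d d' : List V} (hsaw : IsSaw G y (l ++ d)) (hF : y :: (l ++ d) ⊆ F)
    (hd : IsSaw Gbar (l.getLastD y) d')
    (hmem : ∀ t ∈ d', t ∈ d ∨ t ∉ F ∧ ∃ z ∈ l.getLastD y :: d, G.dist z t ≤ R) :
    IsSaw Gbar y (l' ++ d') := by
  obtain ⟨hl', hlast, x, -, hnear, hl'mem⟩ := hl
  obtain ⟨-, -, hdisj⟩ := SelfAvoiding.isSaw_append.1 hsaw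
  have hlF : ∀ t ∈ y :: l, t ∈ F := fun t ht => hF (List.mem_append_left d ht)
  have hdF : ∀ t ∈ d, t ∈ F := fun t ht => hF (List.mem_append_right (y :: l) ht)
  refine SelfAvoiding.isSaw_append.2 ⟨hl', hlast ▸ hd, fun t ht ht' => ?_⟩
  have ht : t ∈ y :: l ∨ t ∉ F ∧ G.dist x t ≤ R := by
    rcases List.mem_cons.1 ht with rfl | ht
    · exact Or.inl List.mem_cons_self
    · exact (hl'mem t ht).imp_left (List.mem_cons_of_mem _)
  rcases ht, hmem t ht' with ⟨ht | ⟨htF, hxt⟩, htd | ⟨htF', z, hz, hzt⟩⟩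
  · exact hdisj t ht htd
  · exact htF' (hlF t ht)
  · exact htF (hdF t htd)
  · have hxz : G.dist x z ≤ 2 * R := by
      have := hc.dist_triangle (u := x) (v := t) (w := z)
      rw [SimpleGraph.dist_comm (u := t)] at this
      omega
    rcases List.mem_cons.1 hz with rfl | hz
    · exact (hnear _ (hlF _ List.getLastD_mem_cons) hxz).2 rfl
    · exact hdisj z (hnear z (hdF z hz) hxz).1 hz

theorem Splice.isSaw (hc : G.Connected) (hGB : G ≤ Gbar) {m r : ℕ} {P : V → List V → Prop}
    {T : V → List V → List V}
    (hT : ∀ y c, P y c → y :: c ⊆ F → IsReplacement G Gbar R F y c (T y c))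
    (h : Splice m P T r y l l') (hl : IsSaw G y l) (hF : y :: l ⊆ F) :
    IsSaw Gbar y l' ∧ ∀ t ∈ l', t ∈ l ∨ t ∉ F ∧ ∃ x ∈ y :: l, G.dist x t ≤ R := by
  induction h with
  | nil => exact ⟨isSaw_nil, fun t ht => Or.inl ht⟩
  | @keep _ y c l l' _ _ ih =>
    obtain ⟨hcsaw, hlsaw, hdisj⟩ := isSaw_append.1 hl
    have hsub : c.getLastD y :: l ⊆ y :: (c ++ l) :=
      List.cons_subset.2 ⟨List.mem_append_left l List.getLastD_mem_cons,
        List.subset_append_right (y :: c) l⟩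
    obtain ⟨hsaw, hmem⟩ := ih hlsaw (List.Subset.trans hsub hF)
    refine ⟨isSaw_append.2 ⟨hcsaw.mono hGB, hsaw, fun t ht ht' => ?_⟩, fun t ht => ?_⟩
    · exact (hmem t ht').elim (hdisj t ht) fun h => h.1 (hF (List.mem_append_left l ht))
    · rcases List.mem_append.1 ht with ht | ht
      · exact Or.inl (List.mem_append_left l ht)
      · exact (hmem t ht).imp (List.mem_append_right c)
          (And.imp_right fun ⟨x, hx, hxt⟩ => ⟨x, hsub hx, hxt⟩)
  | @replace _ y c l l' _ hP _ ih =>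
    have hsub : c.getLastD y :: l ⊆ y :: (c ++ l) :=
      List.cons_subset.2 ⟨List.mem_append_left l List.getLastD_mem_cons,
        List.subset_append_right (y :: c) l⟩
    have hrep := hT y c hP (List.Subset.trans (List.subset_append_left (y :: c) l) hF)
    obtain ⟨hsaw, hmem⟩ := ih (isSaw_append.1 hl).2.1 (List.Subset.trans hsub hF)
    refine ⟨hrep.isSaw_append hc hl hF hsaw hmem, fun t ht => ?_⟩
    obtain ⟨-, -, x, hx, -, hTmem⟩ := hrep
    rcases List.mem_append.1 ht with ht | ht
    · exact (hTmem t ht).imp (List.mem_append_left l)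
        (And.imp_right fun hxt => ⟨x, List.mem_append_left l hx, hxt⟩)
    · exact (hmem t ht).imp (List.mem_append_right c)
        (And.imp_right fun ⟨x, hx, hxt⟩ => ⟨x, hsub hx, hxt⟩)

variable [G.LocallyFinite] {r b : ℕ}

theorem IsSaw.length_le_add_ncard {H : SimpleGraph V} (hc : G.Connected) (hl' : IsSaw H y l')
    (hmem : ∀ t ∈ y :: l', t ∈ y :: l ∨ G.dist x t ≤ R) :
    l'.length ≤ l.length + {t | G.dist x t ≤ R}.ncard := by
  classical
  obtain ⟨hy, hnodup⟩ := List.nodup_cons.1 hl'.2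
  have hfin := finite_setOf_dist_le hc x R
  have hsub : l'.toFinset ⊆ l.toFinset ∪ hfin.toFinset := by
    intro t ht
    have ht := List.mem_toFinset.1 ht
    have hty : t ≠ y := fun h => hy (h ▸ ht)
    simpa [hty] using hmem t (List.mem_cons_of_mem _ ht)
  rw [← List.toFinset_card_of_nodup hnodup, Set.ncard_eq_toFinset_card _ hfin]
  exact (Finset.card_le_card hsub).trans ((Finset.card_union_le _ _).trans
    (Nat.add_le_add_right (List.toFinset_card_le _) _))

theorem LocallyBiconnected.exists_replacement (hloc : LocallyBiconnected G r R)
    (hc : G.Connected) (hr : 1 ≤ r) (hrR : r ≤ R) (hGB : G ≤ Gbar)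
    (hnew : ∀ x, ∃ u w, G.dist x u ≤ r ∧ G.dist x w ≤ r ∧ Gbar.Adj u w ∧ ¬G.Adj u w)
    (hb : ∀ x, {t | G.dist x t ≤ R}.ncard ≤ b) (hL : 1 ≤ L) (hl : IsSaw G y l)
    (hlen : l.length = L + b) (hdense : ¬Sparse G (2 * R) k (y :: l.take L)) :
    ∃ l', (∀ F, Sparse G (2 * R) (k + 1) F → y :: l ⊆ F → IsReplacement G Gbar R F y l l') ∧
      ¬(y :: l'.take (L + b)).IsChain G.Adj ∧ l'.length ≤ l.length + b := by
  classical
  obtain ⟨x, hx, hk⟩ : ∃ x ∈ y :: l.take L, k ≤ localCount G (2 * R) (y :: l.take L) x := by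
    simpa only [Sparse, not_forall, not_lt, exists_prop] using hdense
  obtain ⟨u, w, hu, hw, hadj, hnadj⟩ := hnew x
  have hlenL : (l.take L).length = L := by simp [hlen]
  have hne : l.take L ≠ [] := List.ne_nil_of_length_pos (hL.trans_eq hlenL.symm)
  obtain ⟨l₁, hl₁, hlast, hmem, hchain⟩ :=
    hloc.exists_surgery hr hrR hGB (hl.take L) hne hx hu hw hadj hnadj
  have hb₀ : 1 ≤ b :=
    ((Set.ncard_pos (finite_setOf_dist_le hc x R)).2 ⟨x, by simp⟩).trans_le (hb x)
  have hl₁len : l₁.length ≤ L + b :=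
    (hl₁.length_le_add_ncard hc hmem).trans (add_le_add hlenL.le (hb x))
  refine ⟨l₁ ++ l.drop L, fun F hF hlF => ?_, fun h => hchain ?_, ?_⟩
  · exact hF.isReplacement_append_drop hGB hl (by omega) hlF hx hk hl₁ hlast hmem
  · rw [List.take_append, List.take_of_length_le hl₁len, isChain_cons_append] at h
    exact h.1
  · simp only [List.length_append, List.length_drop]
    omega

end Replacement

section Pattern

variable {V : Type*} {G : SimpleGraph V} {r k L m n s : ℕ} {μ : ℝ}

theorem ncard_setOf_dist_le_eq (hvt : ∀ u w : V, ∃ γ : G ≃g G, γ u = w) (x y : V) (r : ℕ) :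
    {t | G.dist x t ≤ r}.ncard = {t | G.dist y t ≤ r}.ncard := by
  obtain ⟨γ, rfl⟩ := hvt y x
  rw [← Set.ncard_image_of_injective {t | G.dist y t ≤ r} γ.injective]
  congr 1
  ext t
  obtain ⟨t, rfl⟩ := γ.surjective t
  simp [dist_map_iso]

variable [G.LocallyFinite]

open Classical in
theorem card_filter_take_saws_le (hs : ∀ y, (saws G y n).card ≤ s) (Q : List V → Prop) (y : V) :
    ((saws G y (m + n)).filter fun l => Q (l.take m)).card ≤
      ((saws G y m).filter Q).card * s := by
  rw [← smul_eq_mul]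
  have hC : ∀ c ∈ (saws G y m).filter Q, c.length = m :=
    fun c hc => (mem_saws.1 (Finset.mem_filter.1 hc).1).2
  calc
    _ ≤ ((saws G y (m + n)).filter fun l => l.take m ∈ (saws G y m).filter Q).card := by
      refine Finset.card_le_card fun l hl => ?_
      obtain ⟨hl, hQ⟩ := Finset.mem_filter.1 hl
      obtain ⟨hsaw, hlen⟩ := mem_saws.1 hl
      exact Finset.mem_filter.2 ⟨hl, Finset.mem_filter.2
        ⟨mem_saws.2 ⟨hsaw.take m, by simp [hlen]⟩, hQ⟩⟩
    _ = ∑ c ∈ (saws G y m).filter Q, (tails (saws G y (m + n)) c).card := by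
      rw [Finset.card_eq_sum_ones, ← sum_tails hC]
      simp only [Finset.card_eq_sum_ones]
    _ ≤ _ := Finset.sum_le_card_nsmul _ _ _ fun c hc =>
      (Finset.card_le_card (tails_subset_saws subset_rfl (hC c hc))).trans (hs _)

open Classical in
/-- The number of `n`-step self-avoiding walks from `v` which are sparse. -/
noncomputable def sparseCount (G : SimpleGraph V) [G.LocallyFinite] (r k : ℕ) (v : V) (n : ℕ) : ℕ :=
  ((saws G v n).filter fun l => Sparse G r k (v :: l)).card

theorem sparseCount_eq (hvt : ∀ u w : V, ∃ γ : G ≃g G, γ u = w) (x y : V) :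
    sparseCount G r k x n = sparseCount G r k y n := by
  classical
  obtain ⟨γ, rfl⟩ := hvt y x
  exact card_filter_saws_map γ y n _ _ fun l => by rw [← List.map_cons, sparse_map_iff]

theorem sparseCount_one (v : V) : sparseCount G r 1 v n = 0 := by
  classical
  exact Finset.card_eq_zero.2 (Finset.filter_eq_empty_iff.2 fun _ _ =>
    not_sparse_one (List.cons_ne_nil _ _))

theorem sparseCount_eq_card_saws (hc : G.Connected) (hk : ∀ x, {t | G.dist x t ≤ r}.ncard < k)
    (v : V) : sparseCount G r k v n = (saws G v n).card := by
  classical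
  exact congrArg Finset.card (Finset.filter_true_of_mem fun _ _ => sparse_of_ncard_lt hc hk)

theorem exists_sparseCount_threshold (hc : G.Connected)
    (hvt : ∀ u w : V, ∃ γ : G ≃g G, γ u = w) (hμ : 1 ≤ μ)
    (hsaws : ∀ x n, μ ^ n ≤ (saws G x n).card) (r : ℕ) (v : V) (S : ℝ) :
    ∃ k L : ℕ, 1 ≤ L ∧ sparseCount G r k v L * S < μ ^ L ∧
      ∃ c : ℝ, 0 < c ∧ ∀ n, 1 ≤ n → c * μ ^ n ≤ sparseCount G r (k + 1) v n := by
  let Negligible (k : ℕ) : Prop :=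
    ∀ S : ℝ, ∃ n : ℕ, 1 ≤ n ∧ sparseCount G r k v n * S < μ ^ n
  have hone : Negligible 1 := fun S => ⟨1, le_rfl, by simp [sparseCount_one]; linarith⟩
  have hball : ¬Negligible ({t | G.dist v t ≤ r}.ncard + 1) := fun h => by
    obtain ⟨n, -, hn⟩ := h 1
    rw [sparseCount_eq_card_saws hc fun x => by
      rw [ncard_setOf_dist_le_eq hvt x v]; exact Nat.lt_succ_self _, mul_one] at hn
    exact absurd (hsaws v n) (not_le.2 hn)
  obtain ⟨k, hk, hk'⟩ : ∃ k, Negligible k ∧ ¬Negligible (k + 1) := by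
    by_contra! h
    exact hball (Nat.le_induction hone (fun k _ => h k) _ (Nat.le_add_left 1 _))
  obtain ⟨L, hL, hLS⟩ := hk S
  refine ⟨k, L, hL, hLS, ?_⟩
  simp only [Negligible, not_forall, not_exists, not_and, not_lt] at hk'
  obtain ⟨S', hS'⟩ := hk'
  have hS'pos : 0 < S' := by
    refine pos_of_mul_pos_right ?_ (Nat.cast_nonneg (sparseCount G r (k + 1) v 1))
    exact (by positivity : 0 < μ ^ 1).trans_le (hS' 1 le_rfl)
  refine ⟨S'⁻¹, inv_pos.2 hS'pos, fun n hn => ?_⟩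
  rw [inv_mul_le_iff₀ hS'pos, mul_comm]
  exact hS' n hn

end Pattern

section Counting

variable {V : Type*} {G : SimpleGraph V} [G.LocallyFinite] {m s : ℕ} {μ : ℝ}
  {P : V → List V → Prop}

open Classical in
theorem exists_card_filter_goodCount_lt_le (hμ : 0 < μ) (hs₀ : 1 ≤ s)
    (hs : ∀ y, (saws G y m).card ≤ s)
    (ha : ∀ y, (((saws G y m).filter fun c => ¬P y c).card : ℝ) ≤ μ ^ m / 2) (v : V) :
    ∃ e, 1 ≤ e ∧ ∀ M,
      (((saws G v (e * M * m)).filter fun l => goodCount m P (e * M) v l < M).card : ℝ) ≤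
        (1 / 2) ^ M * μ ^ (e * M * m) := by
  have hsaws (y : V) : ((saws G y m).card : ℝ) ≤ s := by exact_mod_cast hs y
  obtain ⟨t, ht, ht₁, hts⟩ : ∃ t : ℝ, 0 < t ∧ t ≤ 1 ∧ t * s ≤ 1 / 4 * μ ^ m := by
    refine ⟨min 1 (1 / 4 * μ ^ m / s), by positivity, min_le_left _ _, ?_⟩
    rw [← le_div_iff₀ (by positivity)]
    exact min_le_right _ _
  obtain ⟨e, he⟩ := exists_pow_lt_of_lt_one (half_pos ht) (by norm_num : (3 / 4 : ℝ) < 1)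
  have he₀ : e ≠ 0 := by
    rintro rfl
    linarith [pow_zero (3 / 4 : ℝ)]
  refine ⟨e, Nat.one_le_iff_ne_zero.2 he₀, fun M => ?_⟩
  refine le_of_mul_le_mul_right ?_ (pow_pos ht M)
  calc
    _ ≤ (3 / 4 * μ ^ m) ^ (e * M) :=
      card_filter_goodCount_lt_mul_pow_le ht ht₁ hsaws ha (by linarith) _ M v
    _ = ((3 / 4) ^ e) ^ M * μ ^ (e * M * m) := by
      rw [mul_pow, ← pow_mul, ← pow_mul, mul_comm m]
    _ ≤ (t / 2) ^ M * μ ^ (e * M * m) := by gcongr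
    _ = (1 / 2) ^ M * μ ^ (e * M * m) * t ^ M := by
      rw [div_eq_mul_one_div, mul_pow]
      ring

open Classical in
theorem eventually_le_card_goodCount {e r k : ℕ} {c : ℝ} (hμ : 0 < μ) (hc : 0 < c) (he : 1 ≤ e)
    (hm : 1 ≤ m) {v : V} (hsparse : ∀ n, 1 ≤ n → c * μ ^ n ≤ sparseCount G r k v n)
    (hfew : ∀ M,
      (((saws G v (e * M * m)).filter fun l => goodCount m P (e * M) v l < M).card : ℝ) ≤
        (1 / 2) ^ M * μ ^ (e * M * m)) :
    ∀ᶠ M in atTop, c / 2 * μ ^ (e * M * m) ≤ ((saws G v (e * M * m)).filter fun l =>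
      Sparse G r k (v :: l) ∧ M ≤ goodCount m P (e * M) v l).card := by
  have hhalf : ∀ᶠ M : ℕ in atTop, (1 / 2 : ℝ) ^ M < c / 2 :=
    (tendsto_pow_atTop_nhds_zero_of_lt_one (by norm_num) (by norm_num)).eventually_lt_const
      (half_pos hc)
  filter_upwards [hhalf, eventually_ge_atTop 1] with M hM hM₁
  have hsplit : sparseCount G r k v (e * M * m) ≤ _ + _ :=
    (Finset.card_le_card fun l hl => ?_).trans (Finset.card_union_le
      ((saws G v (e * M * m)).filter fun l => Sparse G r k (v :: l) ∧ M ≤ goodCount m P (e * M) v l)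
      ((saws G v (e * M * m)).filter fun l => goodCount m P (e * M) v l < M))
  · have hsplit' := (Nat.cast_le (α := ℝ)).2 hsplit
    have hupper : (1 / 2) ^ M * μ ^ (e * M * m) ≤ c / 2 * μ ^ (e * M * m) := by gcongr
    rw [Nat.cast_add] at hsplit'
    linarith [hfew M, hsparse (e * M * m) (Nat.mul_pos (Nat.mul_pos he hM₁) hm)]
  · obtain ⟨hl, hsp⟩ := Finset.mem_filter.1 hl
    rw [Finset.mem_union, Finset.mem_filter, Finset.mem_filter]
    exact (le_or_gt M _).imp (fun h => ⟨hl, hsp, h⟩) fun h => ⟨hl, h⟩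

theorem card_biUnion_saws_le {H : SimpleGraph V} [H.LocallyFinite] [DecidableEq V] {Δ : ℕ}
    (hΔ : ∀ y, H.degree y ≤ Δ) (hΔ₀ : 1 ≤ Δ) (v : V) (n j : ℕ) :
    ((Finset.range (j + 1)).biUnion fun i => saws H v (n + i)).card ≤
      (2 * Δ) ^ j * (saws H v n).card := by
  calc
    _ ≤ (Finset.range (j + 1)).card * (Δ ^ j * (saws H v n).card) := by
      refine Finset.card_biUnion_le_card_mul _ _ _ fun i hi => ?_
      refine (card_saws_add_le_pow_mul hΔ v n i).trans (Nat.mul_le_mul_right _ ?_)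
      exact Nat.pow_le_pow_right hΔ₀ (Nat.lt_succ_iff.1 (Finset.mem_range.1 hi))
    _ ≤ 2 ^ j * (Δ ^ j * (saws H v n).card) := by
      rw [Finset.card_range]
      exact Nat.mul_le_mul_right _ Nat.lt_two_pow_self
    _ = _ := by rw [mul_pow, mul_assoc]

theorem card_mul_choose_le {Gbar : SimpleGraph V} [Gbar.LocallyFinite] {Δ b N r M : ℕ}
    {T : V → List V → List V} {v : V} {X : Finset (List V)} (hΔ : ∀ y, Gbar.degree y ≤ Δ)
    (hΔ₀ : 1 ≤ Δ) (hs : ∀ y, (saws G y m).card ≤ s)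
    (hchain : ∀ y c, P y c → ¬(y :: (T y c).take m).IsChain G.Adj)
    (hlen : ∀ y c, P y c → (T y c).length ≤ c.length + b) (hr : r ≤ N)
    (hX : ∀ l ∈ X, l ∈ saws G v (N * m) ∧ M ≤ goodCount m P N v l)
    (hsplice : ∀ l ∈ X, ∀ l', Splice m P T r v l l' → IsSaw Gbar v l') :
    X.card * M.choose r ≤
      (s * (2 * Δ) ^ (m + b)) ^ r * (saws Gbar v ((N - r) * m)).card := by
  classical
  have hmem : ∀ l ∈ X, ∀ l', Splice m P T r v l l' → l' ∈
      (Finset.range ((m + b) * r + 1)).biUnion fun i => saws Gbar v ((N - r) * m + i) := by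
    intro l hl l' h
    have hl_len := (mem_saws.1 (hX l hl).1).2
    have hlower := h.length_le
    have hupper := h.length_le_add_mul hlen
    rw [hl_len] at hlower hupper
    have hN : N * m = (N - r) * m + r * m := by rw [← add_mul, Nat.sub_add_cancel hr]
    have hmb : (m + b) * r = r * m + r * b := by ring
    refine Finset.mem_biUnion.2 ⟨l'.length - (N - r) * m, Finset.mem_range.2 (by omega),
      mem_saws.2 ⟨hsplice l hl l' h, by omega⟩⟩
  calc
    X.card * M.choose r ≤ ∑ l ∈ X, (goodCount m P N v l).choose r :=
      Finset.card_nsmul_le_sum _ _ _ fun l hl => Nat.choose_le_choose _ (hX l hl).2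
    _ ≤ s ^ r * _ :=
      sum_choose_goodCount_le hs hchain N r v X _ (fun l hl => (hX l hl).1) hmem
    _ ≤ s ^ r * ((2 * Δ) ^ ((m + b) * r) * (saws Gbar v ((N - r) * m)).card) :=
      Nat.mul_le_mul_left _ (card_biUnion_saws_le hΔ hΔ₀ v _ _)
    _ = _ := by rw [mul_pow s, pow_mul, mul_assoc]

end Counting

section Asymptotics

theorem pow_le_choose_mul (K r : ℕ) : K ^ r ≤ (K * r).choose r := by
  induction r with
  | zero => simp
  | succ r ih =>
    cases K with
    | zero => simp
    | succ K =>
      have hstep := Nat.add_one_mul_choose_eq ((K + 1) * r + K) r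
      rw [show (K + 1) * r + K + 1 = (K + 1) * (r + 1) by ring, mul_right_comm] at hstep
      calc
        (K + 1) ^ (r + 1) ≤ (K + 1) * ((K + 1) * r + K).choose r := by
          rw [pow_succ']
          exact Nat.mul_le_mul_left _ (ih.trans (Nat.choose_le_choose _ (Nat.le_add_right _ _)))
        _ = _ := Nat.eq_of_mul_eq_mul_right r.succ_pos hstep

theorem exists_mul_pow_le_of_mul_pow_mul_le {σ : ℕ → ℝ} {Δ μ C : ℝ} {q : ℕ} (hΔ : 1 ≤ Δ)
    (hμ : 1 ≤ μ) (hC : 0 < C) (hq : 1 ≤ q) (hσ : ∀ n, 0 ≤ σ n)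
    (hmono : ∀ m n, σ (m + n) ≤ Δ ^ n * σ m)
    (h : ∀ᶠ r in atTop, C * (2 * μ ^ q) ^ r ≤ σ (q * r)) :
    ∃ lam c : ℝ, μ < lam ∧ 0 < c ∧ ∀ n : ℕ, c * lam ^ n ≤ σ n := by
  obtain ⟨r₀, hr₀⟩ := eventually_atTop.1 h
  obtain ⟨lam, hlam, hpow⟩ : ∃ lam : ℝ, 0 ≤ lam ∧ lam ^ q = 2 * μ ^ q :=
    ⟨(2 * μ ^ q) ^ (q : ℝ)⁻¹, by positivity,
      Real.rpow_inv_natCast_pow (by positivity) (Nat.one_le_iff_ne_zero.1 hq)⟩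
  have hlt : μ < lam := by
    refine lt_of_pow_lt_pow_left₀ q hlam ?_
    linarith [one_le_pow₀ hμ (n := q)]
  refine ⟨lam, C / Δ ^ (q * (1 + r₀)), hlt, by positivity, fun n => ?_⟩
  obtain ⟨r, d, hr, hd, hrd⟩ : ∃ r d, r₀ ≤ r ∧ d ≤ q * (1 + r₀) ∧ q * r = n + d := by
    have hn := Nat.div_add_mod n q
    have hmod := Nat.mod_lt n hq
    have hmul : q * (n / q + (1 + r₀)) = q * (n / q) + q * (1 + r₀) := mul_add ..
    have hle : q ≤ q * (1 + r₀) := Nat.le_mul_of_pos_right _ (by omega)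
    generalize n / q = i at hn hmul
    exact ⟨i + (1 + r₀), q * (1 + r₀) - n % q, by omega, by omega, by omega⟩
  rw [div_mul_eq_mul_div, div_le_iff₀' (by positivity)]
  calc
    C * lam ^ n ≤ C * lam ^ (n + d) := by
      gcongr
      exacts [hμ.trans hlt.le, Nat.le_add_right n d]
    _ = C * (2 * μ ^ q) ^ r := by rw [← hpow, ← pow_mul, hrd]
    _ ≤ σ (n + d) := hrd ▸ hr₀ r hr
    _ ≤ Δ ^ d * σ n := hmono n d
    _ ≤ Δ ^ (q * (1 + r₀)) * σ n := by
      have := hσ n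
      gcongr

theorem exists_mul_pow_le_of_mul_choose_le {σ X : ℕ → ℕ} {Δ K e m : ℕ} {μ C : ℝ} (hΔ : 1 ≤ Δ)
    (hμ : 1 ≤ μ) (hC : 0 < C) (hK : 1 ≤ K) (he : 1 ≤ e) (hm : 1 ≤ m)
    (hmono : ∀ m n, σ (m + n) ≤ Δ ^ n * σ m)
    (hX : ∀ᶠ M in atTop, C * μ ^ (e * M * m) ≤ X M)
    (hXσ : ∀ M r, r ≤ e * M → X M * M.choose r ≤ K ^ r * σ ((e * M - r) * m)) :
    ∃ lam c : ℝ, μ < lam ∧ 0 < c ∧ ∀ n : ℕ, c * lam ^ n ≤ σ n := by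
  have hKe : 2 * K ≤ e * (2 * K) := Nat.le_mul_of_pos_left _ he
  obtain ⟨p, hp⟩ : ∃ p, e * (2 * K) = p + 1 := ⟨e * (2 * K) - 1, by omega⟩
  refine exists_mul_pow_le_of_mul_pow_mul_le (σ := fun n => σ n) (Δ := Δ) (q := p * m)
    (by exact_mod_cast hΔ) hμ hC (Nat.mul_pos (by omega) hm) (fun n => by positivity)
    (fun m n => by exact_mod_cast hmono m n) ?_
  have htendsto : Tendsto (2 * K * ·) atTop atTop := tendsto_id.const_mul_atTop' (by omega)
  filter_upwards [htendsto.eventually hX] with r hr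
  have heM : e * (2 * K * r) = p * r + r := by rw [← mul_assoc, hp, add_one_mul]
  have hdouble : X (2 * K * r) * 2 ^ r ≤ σ (p * m * r) := by
    refine Nat.le_of_mul_le_mul_left ?_ (pow_pos hK r)
    calc
      K ^ r * (X (2 * K * r) * 2 ^ r) = X (2 * K * r) * (2 * K) ^ r := by rw [mul_pow]; ring
      _ ≤ X (2 * K * r) * (2 * K * r).choose r :=
        Nat.mul_le_mul_left _ (pow_le_choose_mul (2 * K) r)
      _ ≤ K ^ r * σ ((e * (2 * K * r) - r) * m) := hXσ _ r (by omega)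
      _ = K ^ r * σ (p * m * r) := by rw [heM, Nat.add_sub_cancel, mul_right_comm]
  calc
    C * (2 * μ ^ (p * m)) ^ r = C * μ ^ (p * r * m) * 2 ^ r := by
      rw [mul_pow, ← pow_mul, mul_right_comm p]
      ring
    _ ≤ C * μ ^ (e * (2 * K * r) * m) * 2 ^ r := by
      gcongr C * ?_ * 2 ^ r
      exact pow_le_pow_right₀ hμ (Nat.mul_le_mul_right _ (by omega))
    _ ≤ X (2 * K * r) * 2 ^ r := by gcongr
    _ ≤ σ (p * m * r) := by exact_mod_cast hdouble

end Asymptotics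

section Biconnected

variable {V : Type*} {G Gbar : SimpleGraph V}

/-- A chunk `c` of `n` steps of a walk, starting at `y`, whose first `L` steps are not sparse. Only
such chunks are modified; the steps after the `L`-th are spare room for a longer detour. -/
def IsDenseChunk (G : SimpleGraph V) (r k L n : ℕ) (y : V) (c : List V) : Prop :=
  IsSaw G y c ∧ c.length = n ∧ ¬Sparse G r k (y :: c.take L)

variable [G.LocallyFinite] {r R k L b : ℕ} {μ : ℝ}

open Classical in
theorem card_filter_not_isDenseChunk_le (hvt : ∀ u w : V, ∃ γ : G ≃g G, γ u = w) (v y : V) :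
    ((saws G y (L + b)).filter fun c => ¬IsDenseChunk G r k L (L + b) y c).card ≤
      sparseCount G r k v L * (saws G v b).card := by
  rw [sparseCount_eq hvt v y]
  refine (Finset.card_le_card fun c hc => ?_).trans (card_filter_take_saws_le
    (fun z => (card_saws_eq hvt z v b).le) (fun c => Sparse G r k (y :: c)) y)
  obtain ⟨hc, hsparse⟩ := Finset.mem_filter.1 hc
  obtain ⟨hsaw, hlen⟩ := mem_saws.1 hc
  exact Finset.mem_filter.2 ⟨hc, by_contra fun h => hsparse ⟨hsaw, hlen, h⟩⟩

theorem LocallyBiconnected.exists_chunk_map (hloc : LocallyBiconnected G r R)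
    (hc : G.Connected) (hr : 1 ≤ r) (hrR : r ≤ R) (hGB : G ≤ Gbar)
    (hnew : ∀ x, ∃ u w, G.dist x u ≤ r ∧ G.dist x w ≤ r ∧ Gbar.Adj u w ∧ ¬G.Adj u w)
    (hb : ∀ x, {t | G.dist x t ≤ R}.ncard ≤ b) (hL : 1 ≤ L) (k : ℕ) :
    ∃ T : V → List V → List V, ∀ y c, IsDenseChunk G (2 * R) k L (L + b) y c →
      (∀ F, Sparse G (2 * R) (k + 1) F → y :: c ⊆ F → IsReplacement G Gbar R F y c (T y c)) ∧
      ¬(y :: (T y c).take (L + b)).IsChain G.Adj ∧ (T y c).length ≤ c.length + b := by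
  have h (y : V) (c : List V) : ∃ l', IsDenseChunk G (2 * R) k L (L + b) y c →
      (∀ F, Sparse G (2 * R) (k + 1) F → y :: c ⊆ F → IsReplacement G Gbar R F y c l') ∧
      ¬(y :: l'.take (L + b)).IsChain G.Adj ∧ l'.length ≤ c.length + b := by
    by_cases hdense : IsDenseChunk G (2 * R) k L (L + b) y c
    · obtain ⟨l', hl'⟩ := hloc.exists_replacement hc hr hrR hGB hnew hb hL hdense.1 hdense.2.1
        hdense.2.2
      exact ⟨l', fun _ => hl'⟩
    · exact ⟨[], fun h => absurd h hdense⟩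
  choose T hT using h
  exact ⟨T, hT⟩

theorem exists_mul_pow_le_card_saws_of_not_hasCutVertex [Infinite V] [Gbar.LocallyFinite] {Δ : ℕ}
    (hcut : ¬HasCutVertex G) (hc : G.Connected) (hvt : ∀ u w : V, ∃ γ : G ≃g G, γ u = w)
    (hGB : G ≤ Gbar) (hΔ : ∀ y, Gbar.degree y ≤ Δ) (hr : 1 ≤ r)
    (hnew : ∀ x, ∃ u w, G.dist x u ≤ r ∧ G.dist x w ≤ r ∧ Gbar.Adj u w ∧ ¬G.Adj u w)
    (hμ : 1 ≤ μ) (hsaws : ∀ x n, μ ^ n ≤ (saws G x n).card) (v : V) :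
    ∃ lam c : ℝ, μ < lam ∧ 0 < c ∧ ∀ n : ℕ, c * lam ^ n ≤ (saws Gbar v n).card := by
  classical
  have hμ₀ : 0 < μ := zero_lt_one.trans_le hμ
  obtain ⟨u, w, -, -, hadj, -⟩ := hnew v
  have hΔ₀ : 1 ≤ Δ := ((Gbar.degree_pos_iff_exists_adj u).2 ⟨w, hadj⟩).trans_le (hΔ u)
  obtain ⟨R, hrR, hloc⟩ := exists_locallyBiconnected hc hvt hcut r
  set b := {t | G.dist v t ≤ R}.ncard
  obtain ⟨k, L, hL, hlow, c, hc₀, hhigh⟩ := exists_sparseCount_threshold hc hvt hμ hsaws (2 * R) v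
    (2 * (saws G v b).card)
  obtain ⟨T, hT⟩ := hloc.exists_chunk_map hc hr hrR hGB hnew
    (fun x => (ncard_setOf_dist_le_eq hvt x v R).le) hL k
  set P := IsDenseChunk G (2 * R) k L (L + b)
  set s := (saws G v (L + b)).card
  have hs₀ : 1 ≤ s := one_le_card_saws hc v _
  have hs (y : V) : (saws G y (L + b)).card ≤ s := (card_saws_eq hvt y v _).le
  have hfew (y : V) : (((saws G y (L + b)).filter fun c => ¬P y c).card : ℝ) ≤ μ ^ (L + b) / 2 := by
    have hle := (Nat.cast_le (α := ℝ)).2 (card_filter_not_isDenseChunk_le (r := 2 * R) (k := k)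
      (L := L) (b := b) hvt v y)
    rw [Nat.cast_mul] at hle
    linarith [pow_le_pow_right₀ hμ (Nat.le_add_right L b)]
  obtain ⟨e, he, hcount⟩ := exists_card_filter_goodCount_lt_le hμ₀ hs₀ hs hfew v
  refine exists_mul_pow_le_of_mul_choose_le (K := s * (2 * Δ) ^ (L + b + b)) hΔ₀ hμ (half_pos hc₀)
    (Nat.mul_pos hs₀ (by positivity)) he (by omega) (fun m n => card_saws_add_le_pow_mul hΔ v m n)
    (eventually_le_card_goodCount hμ₀ hc₀ he (by omega) hhigh hcount) fun M N hN => ?_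
  refine card_mul_choose_le hΔ hΔ₀ hs (fun y c h => (hT y c h).2.1) (fun y c h => (hT y c h).2.2)
    hN (fun l hl => ?_) fun l hl l' hl' => ?_
  · rw [Finset.mem_filter] at hl
    exact ⟨hl.1, hl.2.2⟩
  · rw [Finset.mem_filter] at hl
    exact (hl'.isSaw hc hGB (fun y c h => (hT y c h).1 _ hl.2.1) (mem_saws.1 hl.1).1
      (List.Subset.refl _)).1

end Biconnected

section CofiniteOrbit

variable {V : Type*} {G : SimpleGraph V} {Γ A : Subgroup (Equiv.Perm V)} {ρ : V} {r : ℕ}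

theorem exists_forall_lt_dist_coset {ι : Type*} (hc : G.Connected)
    (hΓ : ∀ γ ∈ Γ, ∀ x y, G.dist (γ x) (γ y) = G.dist x y) (hAΓ : A ≤ Γ)
    (hfar : ∀ r, ∃ z, ∀ α ∈ A, r < G.dist z (α ρ)) {ν : ι → Equiv.Perm V} (hν : ∀ i, ν i ∈ Γ)
    (I : Finset ι) (r : ℕ) : ∃ z, ∀ i ∈ I, ∀ α ∈ A, r < G.dist z (ν i (α ρ)) := by
  classical
  induction I using Finset.induction_on generalizing r with
  | empty => exact ⟨ρ, by simp⟩
  | insert i I _ ih =>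
    obtain ⟨y, hy⟩ := hfar r
    obtain ⟨z, hz⟩ := ih (r + G.dist ρ y + r)
    by_cases hi : ∀ α ∈ A, r < G.dist z (ν i (α ρ))
    · refine ⟨z, fun j hj α hα => ?_⟩
      rcases Finset.mem_insert.1 hj with rfl | hj
      · exact hi α hα
      · exact lt_of_le_of_lt (by omega) (hz j hj α hα)
    · push Not at hi
      obtain ⟨α, hα, hzα⟩ := hi
      refine ⟨ν i (α y), fun j hj β hβ => ?_⟩
      rcases Finset.mem_insert.1 hj with rfl | hj
      · have := hy _ (A.mul_mem (A.inv_mem hα) hβ)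
        rwa [← hΓ α (hAΓ hα), ← hΓ (ν j) (hν j), ← Equiv.Perm.mul_apply α,
          mul_inv_cancel_left] at this
      · have hρy : G.dist (ν i (α ρ)) (ν i (α y)) = G.dist ρ y := by
          rw [hΓ _ (hν i), hΓ α (hAΓ hα)]
        have hfarz := hz j hj β hβ
        have h₁ := hc.dist_triangle (u := z) (v := ν i (α ρ)) (w := ν j (β ρ))
        have h₂ := hc.dist_triangle (u := ν i (α ρ)) (v := ν i (α y)) (w := ν j (β ρ))
        omega

/- If the orbit `A ρ` misses arbitrarily large balls, then so does any finite union of its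
translates `ν i A ρ`, but these cover `V`. -/
theorem exists_forall_dist_orbit_le (hc : G.Connected)
    (hΓ : ∀ γ ∈ Γ, ∀ x y, G.dist (γ x) (γ y) = G.dist x y) (hAΓ : A ≤ Γ)
    (hA : FiniteCosetProperty Γ A ρ) : ∃ r, ∀ z, ∃ α ∈ A, G.dist z (α ρ) ≤ r := by
  by_contra! hfar
  obtain ⟨s, ν, hν, -, hcover⟩ := hA
  obtain ⟨z, hz⟩ := exists_forall_lt_dist_coset hc hΓ hAΓ hfar hν Finset.univ 0
  obtain ⟨i, ⟨α, hα, rfl⟩, -⟩ := hcover z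
  simpa using hz i (Finset.mem_univ i) α hα

variable {Gbar : SimpleGraph V}

theorem exists_forall_degree_le [G.LocallyFinite] [Gbar.LocallyFinite] (hc : G.Connected)
    (hA : ∀ α ∈ A, ∀ x y, G.dist (α x) (α y) = G.dist x y)
    (hAbar : ∀ α ∈ A, ∀ u w, Gbar.Adj (α u) (α w) ↔ Gbar.Adj u w)
    (hr : ∀ z, ∃ α ∈ A, G.dist z (α ρ) ≤ r) : ∃ Δ, ∀ v, Gbar.degree v ≤ Δ := by
  set B := (finite_setOf_dist_le hc ρ r).toFinset
  refine ⟨B.sup fun v => Gbar.degree v, fun v => ?_⟩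
  obtain ⟨α, hα, hv⟩ := hr v
  obtain ⟨v, rfl⟩ := α.surjective v
  let γ : Gbar ≃g Gbar := ⟨α, hAbar α hα _ _⟩
  rw [show Gbar.degree (α v) = Gbar.degree v from γ.degree_eq v]
  refine Finset.le_sup (f := fun v => Gbar.degree v) ((Set.Finite.mem_toFinset _).2 ?_)
  rwa [hA α hα, SimpleGraph.dist_comm] at hv

theorem exists_forall_exists_new_edge (hc : G.Connected)
    (hAG : ∀ α ∈ A, ∀ u w, G.Adj (α u) (α w) ↔ G.Adj u w)
    (hAbar : ∀ α ∈ A, ∀ u w, Gbar.Adj (α u) (α w) ↔ Gbar.Adj u w)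
    (hnew : ∃ u w, Gbar.Adj u w ∧ ¬G.Adj u w) (hr : ∀ z, ∃ α ∈ A, G.dist z (α ρ) ≤ r) :
    ∃ R, ∀ x, ∃ u w, G.dist x u ≤ R ∧ G.dist x w ≤ R ∧ Gbar.Adj u w ∧ ¬G.Adj u w := by
  obtain ⟨u, w, hadj, hnadj⟩ := hnew
  refine ⟨r + max (G.dist ρ u) (G.dist ρ w), fun x => ?_⟩
  obtain ⟨α, hα, hx⟩ := hr x
  have hdist (y : V) : G.dist x (α y) ≤ r + G.dist ρ y := by
    let γ : G ≃g G := ⟨α, hAG α hα _ _⟩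
    have hγ : G.dist (α ρ) (α y) = G.dist ρ y := dist_map_iso γ ρ y
    have := hc.dist_triangle (u := x) (v := α ρ) (w := α y)
    omega
  exact ⟨α u, α w, (hdist u).trans (by omega), (hdist w).trans (by omega),
    (hAbar α hα u w).2 hadj, fun h => hnadj ((hAG α hα u w).1 h)⟩

end CofiniteOrbit

end SelfAvoiding

open SelfAvoiding in
theorem augmentation_strict_inequality_general {V : Type*} {G Gbar : SimpleGraph V} [Infinite V]
    [Gbar.LocallyFinite] {Δ r : ℕ} (hconn : G.Connected) (hvt : ∀ u w : V, ∃ γ : G ≃g G, γ u = w)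
    (hsub : G ≤ Gbar) (hΔ : ∀ y, Gbar.degree y ≤ Δ)
    (hnew : ∀ x, ∃ u w, G.dist x u ≤ r ∧ G.dist x w ≤ r ∧ Gbar.Adj u w ∧ ¬G.Adj u w)
    {v : V} {μ : ℝ}
    (hμ : Tendsto (fun n : ℕ => (sawCount G v n : ℝ) ^ ((1 : ℝ) / n)) atTop (nhds μ)) :
    μ < liminf (fun n : ℕ => (sawCount Gbar v n : ℝ) ^ ((1 : ℝ) / n)) atTop := by
  have : G.LocallyFinite := fun x =>
    ((Gbar.neighborSet x).toFinite.subset fun _ h => hsub h).fintype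
  simp only [sawCount_eq_card_saws] at hμ ⊢
  have hμ₁ : 1 ≤ μ := one_le_of_tendsto_card_saws hconn hμ
  have hsaws : ∀ x n, μ ^ n ≤ (saws G x n).card := pow_le_card_saws hconn hvt hμ
  obtain ⟨lam, c, hlam, hc, hgrowth⟩ : ∃ lam c : ℝ, μ < lam ∧ 0 < c ∧
      ∀ n : ℕ, c * lam ^ n ≤ (saws Gbar v n).card := by
    by_cases hcut : HasCutVertex G
    · exact (hcut.cutsEverywhere hconn hvt).exists_mul_pow_le_card_saws hconn hvt hsub hnew hμ₁
        hsaws v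
    · refine exists_mul_pow_le_card_saws_of_not_hasCutVertex (r := r + 1) hcut hconn hvt hsub hΔ
        (Nat.le_add_left 1 r) (fun x => ?_) hμ₁ hsaws v
      obtain ⟨u, w, hu, hw, h⟩ := hnew x
      exact ⟨u, w, hu.trans r.le_succ, hw.trans r.le_succ, h⟩
  exact hlam.trans_le (le_liminf_rpow_one_div hc (by linarith) Δ.cast_nonneg hgrowth
    fun n => by exact_mod_cast card_saws_le_pow hΔ v n)

/-- Strict inequality for quasi-transitive augmentation: if `Ḡ` is obtained from the
infinite, connected, locally finite, vertex-transitive graph `G` by adding at least one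
new edge, and some subgroup `𝒜` of a transitively acting automorphism group `Γ` of `G`
has the finite coset property and consists of automorphisms of `Ḡ`, then the connective
constant strictly increases. -/
theorem augmentation_strict_inequality {V : Type*} (G Gbar : SimpleGraph V) [Infinite V]
    (hconn : G.Connected)
    (hlf : ∀ v : V, (G.neighborSet v).Finite)
    (hlfbar : ∀ v : V, (Gbar.neighborSet v).Finite)
    (hvt : ∀ u w : V, ∃ γ : G ≃g G, γ u = w)
    (hsub : G ≤ Gbar)
    (hproper : ∃ u w : V, Gbar.Adj u w ∧ ¬ G.Adj u w)
    (Γ A : Subgroup (Equiv.Perm V))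
    (hΓaut : ∀ γ ∈ Γ, ∀ u w : V, G.Adj (γ u) (γ w) ↔ G.Adj u w)
    (hΓtrans : ∀ u w : V, ∃ γ ∈ Γ, γ u = w)
    (hAΓ : A ≤ Γ)
    (hfcp : ∃ ρ : V, FiniteCosetProperty Γ A ρ)
    (hAbar : ∀ α ∈ A, ∀ u w : V, Gbar.Adj (α u) (α w) ↔ Gbar.Adj u w)
    (v : V) (μ : ℝ)
    (hμ : Tendsto (fun n : ℕ => (sawCount G v n : ℝ) ^ ((1 : ℝ) / n)) atTop (nhds μ)) :
    μ < liminf (fun n : ℕ => (sawCount Gbar v n : ℝ) ^ ((1 : ℝ) / n)) atTop := by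
  have : G.LocallyFinite := fun x => (hlf x).fintype
  have : Gbar.LocallyFinite := fun x => (hlfbar x).fintype
  have hΓdist : ∀ γ ∈ Γ, ∀ x y, G.dist (γ x) (γ y) = G.dist x y :=
    fun γ hγ => SelfAvoiding.dist_map_iso (G := G) ⟨γ, hΓaut γ hγ _ _⟩
  obtain ⟨ρ, hρ⟩ := hfcp
  obtain ⟨r, hr⟩ := SelfAvoiding.exists_forall_dist_orbit_le hconn hΓdist hAΓ hρ
  obtain ⟨Δ, hΔ⟩ := SelfAvoiding.exists_forall_degree_le hconn
    (fun α hα => hΓdist α (hAΓ hα)) hAbar hr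
  obtain ⟨R, hnew⟩ := SelfAvoiding.exists_forall_exists_new_edge hconn
    (fun α hα => hΓaut α (hAΓ hα)) hAbar hproper hr
  exact augmentation_strict_inequality_general hconn hvt hsub hΔ hnew hμ
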